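/- arXiv:2502.13296 — 11 statements merged into one kernel-verified Lean document; each statement's English description precedes it below -/
import Mathlib

section
/- The Schmidt number of the state ρ̃(λ) on ℂ⁸⊗ℂ⁸ equals 2 for λ = 0, and equals 3 for every λ ∈ (0, 1]. -/
open Matrix
open scoped Kronecker ComplexOrder

/-- The Schmidt rank of a bipartite vector `ψ : m × n → ℂ`, i.e. the rank of the
matrix `C_ψ` with `(C_ψ)_{ij} = ψ (i, j)`. -/
noncomputable def schmidtRank {m n : Type*} [Fintype m] [Fintype n] (ψ : m × n → ℂ) : ℕ :=
  (Matrix.of fun i j => ψ (i, j)).rank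

/-- A matrix `ρ` indexed by `m × n` has Schmidt number at most `r` if it can be written
as `∑_k ψ_k ψ_k†` with each `ψ_k` of Schmidt rank at most `r`. -/
def SchmidtNumberLE {m n : Type*} [Fintype m] [Fintype n]
    (ρ : Matrix (m × n) (m × n) ℂ) (r : ℕ) : Prop :=
  ∃ (k : ℕ) (ψ : Fin k → m × n → ℂ),
    (∀ i, schmidtRank (ψ i) ≤ r) ∧
    ρ = ∑ i, Matrix.vecMulVec (ψ i) (star (ψ i))

/-- The Schmidt number: the least `r` such that `SchmidtNumberLE ρ r`. -/
noncomputable def schmidtNumber {m n : Type*} [Fintype m] [Fintype n]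
    (ρ : Matrix (m × n) (m × n) ℂ) : ℕ :=
  sInf {r | SchmidtNumberLE ρ r}

/-- A density matrix: positive semidefinite with unit trace. -/
def IsDensityMatrix {n : Type*} [Fintype n] (ρ : Matrix n n ℂ) : Prop :=
  ρ.PosSemidef ∧ ρ.trace = 1

/-- An effect: a Hermitian matrix `M` with `0 ≤ M ≤ I`. -/
def IsEffect {n : Type*} [Fintype n] [DecidableEq n] (M : Matrix n n ℂ) : Prop :=
  M.PosSemidef ∧ (1 - M).PosSemidef

/-- The maximally entangled unit vector `|Φ⁺_d⟩ = (1/√d) ∑ᵢ e_{(i,i)}`. -/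
noncomputable def maxEnt (d : ℕ) : Fin d × Fin d → ℂ :=
  fun p => if p.1 = p.2 then ((1 / Real.sqrt d : ℝ) : ℂ) else 0

/-- The projector `P_d = |Φ⁺_d⟩⟨Φ⁺_d|`. -/
noncomputable def projME (d : ℕ) : Matrix (Fin d × Fin d) (Fin d × Fin d) ℂ :=
  Matrix.vecMulVec (maxEnt d) (star (maxEnt d))

/-- The isotropic state `ρ^iso_d(p) = p P_d + (1−p) I/d²`. -/
noncomputable def isoState (d : ℕ) (p : ℝ) : Matrix (Fin d × Fin d) (Fin d × Fin d) ℂ :=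
  (p : ℂ) • projME d + (((1 - p) / (d ^ 2 : ℝ) : ℝ) : ℂ) • 1

/-- `|φ₂⁺⟩ = (1/√2)(e_{(0,0)} + e_{(1,1)}) ∈ ℂ⁸⊗ℂ⁸`. -/
noncomputable def phi2 : Fin 8 × Fin 8 → ℂ :=
  fun q => if q = (0, 0) ∨ q = (1, 1) then ((1 / Real.sqrt 2 : ℝ) : ℂ) else 0

/-- `ρ̃(λ) = λ ρ^iso₈(0.24) + (1−λ)|φ₂⁺⟩⟨φ₂⁺|`. -/
noncomputable def rhoTilde (l : ℝ) : Matrix (Fin 8 × Fin 8) (Fin 8 × Fin 8) ℂ :=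
  (l : ℂ) • isoState 8 0.24 + ((1 - l : ℝ) : ℂ) • Matrix.vecMulVec phi2 (star phi2)

theorem aux_trace_rank (C : Matrix (Fin 8) (Fin 8) ℂ) :
    ‖∑ i, C i i‖ ^ 2 ≤ (C.rank : ℝ) * ∑ i, ∑ j, ‖C i j‖ ^ 2 := by
  classical
  let S : Submodule ℂ (EuclideanSpace ℂ (Fin 8)) := LinearMap.range (Matrix.toEuclideanLin C)
  have hS : Module.finrank ℂ S = C.rank := by
    rw [Matrix.rank_eq_finrank_range_toLin C (EuclideanSpace.basisFun (Fin 8) ℂ).toBasis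
      (EuclideanSpace.basisFun (Fin 8) ℂ).toBasis]
    rw [← Matrix.toEuclideanLin_eq_toLin_orthonormal]
  let b := stdOrthonormalBasis ℂ S
  let w : Fin 8 → S := fun j => ⟨WithLp.toLp 2 (fun i => C i j), by
    refine ⟨EuclideanSpace.single j 1, ?_⟩
    ext i
    simp [Matrix.toLpLin_apply]⟩
  have hw : ∀ i j, C i j = ∑ k, inner ℂ (b k) (w j) * (b k : EuclideanSpace ℂ (Fin 8)) i := by
    intro i j
    have h := congrArg (fun x : S => (x : EuclideanSpace ℂ (Fin 8)) i) (b.sum_repr' (w j))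
    simp only [Submodule.coe_sum, Submodule.coe_smul] at h
    have h2 : ((w j : S) : EuclideanSpace ℂ (Fin 8)) i = C i j := rfl
    rw [← h2, ← h]
    simp
  have hn : ∑ k, ∑ i, ‖(b k : EuclideanSpace ℂ (Fin 8)) i‖ ^ 2 = (C.rank : ℝ) := by
    have : ∀ k, ∑ i, ‖(b k : EuclideanSpace ℂ (Fin 8)) i‖ ^ 2 = 1 := by
      intro k
      rw [← EuclideanSpace.norm_sq_eq]
      have := b.norm_eq_one k
      rw [Submodule.coe_norm] at this
      simp [this]
    simp [this, hS]
  have hv : ∑ k, ∑ j, ‖inner ℂ (b k) (w j)‖ ^ 2 = ∑ i, ∑ j, ‖C i j‖ ^ 2 := by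
    rw [Finset.sum_comm, Finset.sum_comm (f := fun i j => ‖C i j‖ ^ 2)]
    refine Finset.sum_congr rfl fun j _ => ?_
    rw [b.sum_sq_norm_inner_right, Submodule.coe_norm, EuclideanSpace.norm_sq_eq]
  have h1 : ‖∑ i, C i i‖ ≤ ∑ p : Fin (Module.finrank ℂ S) × Fin 8,
      ‖(b p.1 : EuclideanSpace ℂ (Fin 8)) p.2‖ * ‖inner ℂ (b p.1) (w p.2)‖ := by
    rw [Fintype.sum_prod_type_right]
    refine (norm_sum_le _ _).trans (Finset.sum_le_sum fun i _ => ?_)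
    rw [hw i i]
    refine (norm_sum_le _ _).trans (Finset.sum_le_sum fun k _ => ?_)
    rw [norm_mul, mul_comm]
  calc ‖∑ i, C i i‖ ^ 2 ≤ _ := pow_le_pow_left₀ (norm_nonneg _) h1 2
    _ ≤ _ := Finset.sum_mul_sq_le_sq_mul_sq _ _ _
    _ = _ := by rw [Fintype.sum_prod_type, Fintype.sum_prod_type, hn, hv]

theorem aux_lower (ρ : Matrix (Fin 8 × Fin 8) (Fin 8 × Fin 8) ℂ) (r : ℕ)
    (h : SchmidtNumberLE ρ r) :
    (∑ i, ∑ k, ρ (i, i) (k, k)).re ≤ (r : ℝ) * (∑ i, ∑ j, ρ (i, j) (i, j)).re := by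
  obtain ⟨n, ψ, hr, rfl⟩ := h
  have e1 : (∑ i : Fin 8, ∑ k : Fin 8,
      (∑ x, Matrix.vecMulVec (ψ x) (star (ψ x))) (i, i) (k, k)).re
      = ∑ x, ‖∑ i, ψ x (i, i)‖ ^ 2 := by
    have : ∑ i : Fin 8, ∑ k : Fin 8,
      (∑ x, Matrix.vecMulVec (ψ x) (star (ψ x))) (i, i) (k, k)
      = ∑ x, (((‖∑ i, ψ x (i, i)‖ ^ 2 : ℝ)) : ℂ) := by
      simp only [Matrix.sum_apply, Matrix.vecMulVec_apply, Pi.star_apply]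
      simp_rw [Finset.sum_comm (s := Finset.univ (α := Fin 8)) (t := Finset.univ (α := Fin n))]
      refine Finset.sum_congr rfl fun x _ => ?_
      push_cast
      rw [← Complex.mul_conj', map_sum, Finset.sum_mul_sum]
      rfl
    rw [this, ← Complex.ofReal_sum, Complex.ofReal_re]
  have e2 : (∑ i : Fin 8, ∑ j : Fin 8,
      (∑ x, Matrix.vecMulVec (ψ x) (star (ψ x))) (i, j) (i, j)).re
      = ∑ x, ∑ i, ∑ j, ‖ψ x (i, j)‖ ^ 2 := by
    have : ∑ i : Fin 8, ∑ j : Fin 8,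
      (∑ x, Matrix.vecMulVec (ψ x) (star (ψ x))) (i, j) (i, j)
      = ∑ x, (((∑ i, ∑ j, ‖ψ x (i, j)‖ ^ 2 : ℝ)) : ℂ) := by
      simp only [Matrix.sum_apply, Matrix.vecMulVec_apply, Pi.star_apply]
      simp_rw [Finset.sum_comm (s := Finset.univ (α := Fin 8)) (t := Finset.univ (α := Fin n))]
      refine Finset.sum_congr rfl fun x _ => ?_
      push_cast
      simp_rw [← Complex.mul_conj']
      rfl
    rw [this, ← Complex.ofReal_sum, Complex.ofReal_re]
  rw [e1, e2, Finset.mul_sum]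
  refine Finset.sum_le_sum fun x _ => ?_
  have h := aux_trace_rank (Matrix.of fun i j => ψ x (i, j))
  refine h.trans ?_
  refine mul_le_mul_of_nonneg_right ?_ (by positivity)
  exact_mod_cast hr x

theorem aux_of_fintype {ι : Type} [Fintype ι] (ψ : ι → Fin 8 × Fin 8 → ℂ) (r : ℕ)
    (h : ∀ i, schmidtRank (ψ i) ≤ r) :
    SchmidtNumberLE (∑ i, Matrix.vecMulVec (ψ i) (star (ψ i))) r := by
  refine ⟨Fintype.card ι, fun k => ψ ((Fintype.equivFin ι).symm k), fun i => h _, ?_⟩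
  exact (Equiv.sum_comp (Fintype.equivFin ι).symm
    (fun i => Matrix.vecMulVec (ψ i) (star (ψ i)))).symm

theorem aux_add {ρ σ : Matrix (Fin 8 × Fin 8) (Fin 8 × Fin 8) ℂ} {r : ℕ}
    (h : SchmidtNumberLE ρ r) (h' : SchmidtNumberLE σ r) : SchmidtNumberLE (ρ + σ) r := by
  obtain ⟨n, ψ, hr, rfl⟩ := h
  obtain ⟨m, φ, hs, rfl⟩ := h'
  have := aux_of_fintype (Sum.elim ψ φ) r (by rintro (i | i) <;> simp [hr, hs])
  simpa using this

theorem aux_rank_smul (c : ℂ) (ψ : Fin 8 × Fin 8 → ℂ) :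
    schmidtRank (c • ψ) ≤ schmidtRank ψ := by
  unfold schmidtRank
  have : (Matrix.of fun i j => (c • ψ) (i, j))
      = (c • (1 : Matrix (Fin 8) (Fin 8) ℂ)) * (Matrix.of fun i j => ψ (i, j)) := by
    ext i j; simp
  rw [this]
  exact Matrix.rank_mul_le_right _ _

theorem aux_smul {ρ : Matrix (Fin 8 × Fin 8) (Fin 8 × Fin 8) ℂ} {r : ℕ}
    (h : SchmidtNumberLE ρ r) (c : ℝ) (hc : 0 ≤ c) : SchmidtNumberLE ((c : ℂ) • ρ) r := by
  obtain ⟨n, ψ, hr, rfl⟩ := h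
  refine ⟨n, fun i => ((Real.sqrt c : ℝ) : ℂ) • ψ i,
    fun i => (aux_rank_smul _ _).trans (hr i), ?_⟩
  rw [Finset.smul_sum]
  refine Finset.sum_congr rfl fun i _ => ?_
  ext p q
  have : ((c : ℝ) : ℂ) = (Real.sqrt c : ℂ) * (Real.sqrt c : ℂ) := by
    rw [← Complex.ofReal_mul, Real.mul_self_sqrt hc]
  simp [Matrix.vecMulVec_apply, this]
  ring

theorem aux_rank_mul {k : ℕ} (ψ : Fin 8 × Fin 8 → ℂ) (U : Fin 8 → Fin k → ℂ)
    (V : Fin k → Fin 8 → ℂ) (h : ∀ i j, ψ (i, j) = ∑ a, U i a * V a j) :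
    schmidtRank ψ ≤ k := by
  unfold schmidtRank
  have : (Matrix.of fun i j => ψ (i, j)) = Matrix.of U * Matrix.of V := by
    ext i j; simp [h, Matrix.mul_apply]
  rw [this]
  refine (Matrix.rank_mul_le_left _ _).trans ?_
  simpa using Matrix.rank_le_card_width (Matrix.of U)

theorem aux_phi2_LE : SchmidtNumberLE (Matrix.vecMulVec phi2 (star phi2)) 2 := by
  refine ⟨1, fun _ => phi2, fun _ => ?_, by simp⟩
  refine aux_rank_mul _ (fun i a => if i.val = a.val then ((1 / Real.sqrt 2 : ℝ) : ℂ) else 0)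
    (fun a j => if j.val = a.val then 1 else 0) ?_
  intro i j
  fin_cases i <;> fin_cases j <;> simp [phi2, Fin.sum_univ_two]

theorem aux_mono {ρ : Matrix (Fin 8 × Fin 8) (Fin 8 × Fin 8) ℂ} {r s : ℕ}
    (h : SchmidtNumberLE ρ r) (hrs : r ≤ s) : SchmidtNumberLE ρ s := by
  obtain ⟨n, ψ, hr, e⟩ := h
  exact ⟨n, ψ, fun i => (hr i).trans hrs, e⟩

theorem aux_diag (w : Fin 8 × Fin 8 → ℝ) (hw : ∀ p, 0 ≤ w p) :
    SchmidtNumberLE (Matrix.diagonal fun p => (w p : ℂ)) 3 := by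
  have := aux_of_fintype (fun p : Fin 8 × Fin 8 =>
    (Pi.single p ((Real.sqrt (w p) : ℝ) : ℂ) : Fin 8 × Fin 8 → ℂ)) 1 (by
      rintro ⟨a, b⟩
      refine aux_rank_mul _ (fun i _ => if i = a then ((Real.sqrt (w (a, b)) : ℝ) : ℂ) else 0)
        (fun _ j => if j = b then 1 else 0) ?_
      intro i j
      simp only [Pi.single_apply, Prod.mk.injEq, Finset.univ_unique, Finset.sum_const,
        Finset.card_singleton, one_smul]
      by_cases h1 : i = a <;> by_cases h2 : j = b <;> simp [h1, h2])
  refine aux_mono ?_ (show 1 ≤ 3 by norm_num)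
  convert this using 1
  ext p q
  have hs : ∀ p, ((w p : ℝ) : ℂ) = (Real.sqrt (w p) : ℂ) * (Real.sqrt (w p) : ℂ) := by
    intro p
    rw [← Complex.ofReal_mul, Real.mul_self_sqrt (hw p)]
  simp only [Matrix.sum_apply, Matrix.vecMulVec_apply, Pi.star_apply, Pi.single_apply,
    Matrix.diagonal_apply]
  rw [Finset.sum_eq_single p]
  · by_cases h : p = q
    · subst h; simp [hs p]
    · simp [h, Ne.symm h]
  · intro b _ hb; simp [Ne.symm hb]
  · simp

/-- Eight vectors in `ℂ³` of squared norm 4. -/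
noncomputable def auxU : Matrix (Fin 8) (Fin 3) ℂ :=
  !![2, 0, 0;
     1, 1 + Complex.I, 1;
     1, 1, -1 - Complex.I;
     1, 1 - Complex.I, Complex.I;
     1, Complex.I, -1 + Complex.I;
     1, -Complex.I, 1 - Complex.I;
     1, -1 + Complex.I, -Complex.I;
     1, -1, 1 + Complex.I]

noncomputable def auxC (i j : Fin 8) : ℂ := ∑ a, auxU i a * star (auxU j a)

theorem auxC_diag (i : Fin 8) : auxC i i = 4 := by
  fin_cases i <;> simp [auxC, auxU, Fin.sum_univ_three, Complex.ext_iff] <;> norm_num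

theorem auxC_le (i j : Fin 8) (h : i ≠ j) : Complex.normSq (auxC i j) ≤ 6 := by
  fin_cases i <;> fin_cases j <;> first
    | exact absurd rfl h
    | (simp [auxC, auxU, Fin.sum_univ_three, Complex.normSq_apply] <;> norm_num)

/-- A perfect difference set modulo 57. -/
def auxS : Fin 8 → ZMod 57 := ![0, 1, 3, 13, 32, 36, 43, 52]

theorem auxS_sidon : ∀ i j k l : Fin 8, auxS i - auxS j - auxS k + auxS l = 0 ↔
    ((i = j ∧ k = l) ∨ (i = k ∧ j = l)) := by
  decide +kernel

noncomputable def auxPsi (t : ZMod 57) : Fin 8 × Fin 8 → ℂ := fun p =>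
  ZMod.stdAddChar (t * auxS p.1) * star (ZMod.stdAddChar (t * auxS p.2) : ℂ) * auxC p.1 p.2

theorem auxPsi_rank (t : ZMod 57) : schmidtRank (auxPsi t) ≤ 3 := by
  refine aux_rank_mul _ (fun i a => ZMod.stdAddChar (t * auxS i) * auxU i a)
    (fun a j => star (ZMod.stdAddChar (t * auxS j) : ℂ) * star (auxU j a)) ?_
  intro i j
  simp only [auxPsi, auxC, Finset.mul_sum]
  refine Finset.sum_congr rfl fun a _ => ?_
  ring

theorem aux_star_char (x : ZMod 57) :
    star (ZMod.stdAddChar x : ℂ) = ZMod.stdAddChar (-x) := by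
  rw [AddChar.map_neg_eq_conj]; rfl

theorem auxPsi_sum (i j k l : Fin 8) :
    (∑ t : ZMod 57, Matrix.vecMulVec (auxPsi t) (star (auxPsi t))) (i, j) (k, l) =
      if ((i = j ∧ k = l) ∨ (i = k ∧ j = l)) then 57 * (auxC i j * star (auxC k l)) else 0 := by
  have h1 : ∀ t : ZMod 57, Matrix.vecMulVec (auxPsi t) (star (auxPsi t)) (i, j) (k, l) =
      ZMod.stdAddChar (t * (auxS i - auxS j - auxS k + auxS l)) *
        (auxC i j * star (auxC k l)) := by
    intro t
    have : t * (auxS i - auxS j - auxS k + auxS l) =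
      t * auxS i + -(t * auxS j) + -(t * auxS k) + t * auxS l := by ring
    rw [this]
    simp only [AddChar.map_add_eq_mul, Matrix.vecMulVec_apply, Pi.star_apply, auxPsi, star_mul',
      star_star]
    rw [aux_star_char, aux_star_char]
    ring
  rw [Matrix.sum_apply]
  simp_rw [h1]
  rw [← Finset.sum_mul, AddChar.sum_mulShift _ (ZMod.isPrimitive_stdAddChar 57)]
  simp only [auxS_sidon]
  split_ifs <;> simp [ZMod.card]

theorem aux_iso_LE : SchmidtNumberLE (isoState 8 0.24) 3 := by
  have hA := aux_smul (aux_of_fintype auxPsi 3 auxPsi_rank) (0.03 / 16 / 57) (by norm_num)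
  have hB := aux_diag (fun p => if p.1 = p.2 then 0.011875 else
      0.011875 - 0.03 / 16 * Complex.normSq (auxC p.1 p.2)) (by
    rintro ⟨i, j⟩
    dsimp only
    split_ifs with h
    · norm_num
    · have := auxC_le i j h
      linarith)
  have h := aux_add hA hB
  convert h using 1
  ext ⟨i, j⟩ ⟨k, l⟩
  rw [Matrix.add_apply, Matrix.smul_apply, auxPsi_sum, Matrix.diagonal_apply]
  have h8 : ((Real.sqrt 8 : ℝ) : ℂ)⁻¹ * ((Real.sqrt 8 : ℝ) : ℂ)⁻¹ = 1 / 8 := by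
    rw [← mul_inv, ← Complex.ofReal_mul, Real.mul_self_sqrt (by norm_num)]
    norm_num
  simp only [isoState, projME, Matrix.add_apply, Matrix.smul_apply, Matrix.vecMulVec_apply,
    maxEnt, Pi.star_apply, Matrix.one_apply, Prod.mk.injEq, smul_eq_mul]
  by_cases hij : i = j
  · subst hij
    by_cases hkl : k = l
    · subst hkl
      by_cases hik : i = k
      · subst hik
        simp [auxC_diag, h8]
        norm_num
      · simp [auxC_diag, h8, hik]
        norm_num
    · by_cases hik : i = k
      · subst hik
        simp [hkl]
      · simp [hkl, hik]
  · by_cases hik : i = k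
    · subst hik
      by_cases hjl : j = l
      · subst hjl
        have := Complex.mul_conj (auxC i j)
        simp [hij, this]
        norm_num
        ring
      · simp [hij, hjl]
    · simp [hij, hik]

theorem aux_T (l : ℝ) :
    (∑ i, ∑ k, rhoTilde l (i, i) (k, k)).re = 2 + 0.015 * l := by
  have h8 : ((Real.sqrt 8 : ℝ) : ℂ)⁻¹ * ((Real.sqrt 8 : ℝ) : ℂ)⁻¹ = 1 / 8 := by
    rw [← mul_inv, ← Complex.ofReal_mul, Real.mul_self_sqrt (by norm_num)]
    norm_num
  have h2 : ((Real.sqrt 2 : ℝ) : ℂ)⁻¹ * ((Real.sqrt 2 : ℝ) : ℂ)⁻¹ = 1 / 2 := by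
    rw [← mul_inv, ← Complex.ofReal_mul, Real.mul_self_sqrt (by norm_num)]
    norm_num
  have : ∑ i, ∑ k, rhoTilde l (i, i) (k, k) = ((2 + 0.015 * l : ℝ) : ℂ) := by
    simp [rhoTilde, isoState, projME, Matrix.vecMulVec_apply, maxEnt, Matrix.one_apply, phi2,
      Fin.sum_univ_eight, h8, h2]
    ring
  rw [this, Complex.ofReal_re]

theorem aux_tr (l : ℝ) :
    (∑ i, ∑ j, rhoTilde l (i, j) (i, j)).re = 1 := by
  have h8 : ((Real.sqrt 8 : ℝ) : ℂ)⁻¹ * ((Real.sqrt 8 : ℝ) : ℂ)⁻¹ = 1 / 8 := by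
    rw [← mul_inv, ← Complex.ofReal_mul, Real.mul_self_sqrt (by norm_num)]
    norm_num
  have h2 : ((Real.sqrt 2 : ℝ) : ℂ)⁻¹ * ((Real.sqrt 2 : ℝ) : ℂ)⁻¹ = 1 / 2 := by
    rw [← mul_inv, ← Complex.ofReal_mul, Real.mul_self_sqrt (by norm_num)]
    norm_num
  have : ∑ i, ∑ j, rhoTilde l (i, j) (i, j) = ((1 : ℝ) : ℂ) := by
    simp [rhoTilde, isoState, projME, Matrix.vecMulVec_apply, maxEnt, Matrix.one_apply, phi2,
      Fin.sum_univ_eight, h8, h2]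
    ring
  rw [this, Complex.ofReal_re]

theorem aux_ge (l : ℝ) (r : ℕ) (h : SchmidtNumberLE (rhoTilde l) r) :
    2 + 0.015 * l ≤ (r : ℝ) := by
  have := aux_lower _ r h
  rwa [aux_T, aux_tr, mul_one] at this

/-- Lemma 1: `SN(ρ̃(0)) = 2` and `SN(ρ̃(λ)) = 3` for all `λ ∈ (0, 1]`. -/
theorem schmidt_number_rhoTilde :
    schmidtNumber (rhoTilde 0) = 2 ∧
    ∀ l : ℝ, 0 < l → l ≤ 1 → schmidtNumber (rhoTilde l) = 3 := by
  constructor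
  · have h0 : SchmidtNumberLE (rhoTilde 0) 2 := by
      have : rhoTilde 0 = Matrix.vecMulVec phi2 (star phi2) := by simp [rhoTilde]
      rw [this]
      exact aux_phi2_LE
    refine le_antisymm (Nat.sInf_le h0) (le_csInf ⟨2, h0⟩ fun r hr => ?_)
    have := aux_ge 0 r hr
    have h' : (2 : ℝ) ≤ r := by linarith
    exact_mod_cast h'
  · intro l hl hl1
    have h0 : SchmidtNumberLE (rhoTilde l) 3 :=
      aux_add (aux_smul aux_iso_LE l hl.le)
        (aux_smul (aux_mono aux_phi2_LE (by norm_num)) (1 - l) (by linarith))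
    refine le_antisymm (Nat.sInf_le h0) (le_csInf ⟨3, h0⟩ fun r hr => ?_)
    have := aux_ge l r hr
    have h' : (2 : ℝ) < r := by linarith
    have h'' : 2 < r := by exact_mod_cast h'
    exact h''
end

section
/- For every real λ with 0 ≤ λ < 0.312, there exist Hermitian operators A₀, A₁, B₀, B₁ on ℂ⁸, each of the form P − Q with P, Q orthogonal projections satisfying PQ = 0, such that Tr[ρ̃(λ)(A₀⊗B₀ + A₀⊗B₁ + A₁⊗B₀ − A₁⊗B₁)] > 2; that is, ρ̃(λ) violates the CHSH Bell inequality under local projective measurements for λ ∈ [0, 0.312). -/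
open Matrix
open scoped Kronecker ComplexOrder

noncomputable def obsM (a b : ℂ) : Matrix (Fin 8) (Fin 8) ℂ :=
  Matrix.of fun i j => if i = 0 ∧ j = 0 then a else if i = 1 ∧ j = 1 then -a
    else if (i = 0 ∧ j = 1) ∨ (i = 1 ∧ j = 0) then b else if i = j then 1 else 0

lemma obsM_herm (a b : ℂ) (ha : star a = a) (hb : star b = b) : (obsM a b)ᴴ = obsM a b := by
  have ha' : (starRingEnd ℂ) a = a := ha
  have hb' : (starRingEnd ℂ) b = b := hb
  ext i j
  fin_cases i <;> fin_cases j <;> simp [obsM, ha', hb']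

lemma obsM_sq (a b : ℂ) (h : a * a + b * b = 1) : obsM a b * obsM a b = 1 := by
  have h' : b * b + a * a = 1 := by rw [add_comm]; exact h
  ext i j
  rw [Matrix.mul_apply, Fin.sum_univ_eight]
  fin_cases i <;> fin_cases j <;> simp [obsM, h, h'] <;> ring

lemma obs_proj (A : Matrix (Fin 8) (Fin 8) ℂ) (hA : Aᴴ = A) (h2 : A * A = 1) :
    ∃ P Q : Matrix (Fin 8) (Fin 8) ℂ,
        Pᴴ = P ∧ P * P = P ∧ Qᴴ = Q ∧ Q * Q = Q ∧ P * Q = 0 ∧ A = P - Q := by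
  refine ⟨(1/2 : ℂ) • (1 + A), (1/2 : ℂ) • (1 - A), ?_, ?_, ?_, ?_, ?_, ?_⟩
  · simp [Matrix.conjTranspose_smul, hA]
  · simp only [smul_mul_smul_comm, add_mul, mul_add, h2, one_mul, mul_one]
    module
  · simp [Matrix.conjTranspose_smul, hA]
  · simp only [smul_mul_smul_comm, sub_mul, mul_sub, h2, one_mul, mul_one]
    module
  · simp only [smul_mul_smul_comm, add_mul, mul_sub, h2, one_mul, mul_one]
    module
  · module

lemma tr_max (A B : Matrix (Fin 8) (Fin 8) ℂ) :
    trace (projME 8 * (A ⊗ₖ B)) = (1/8) * ∑ i, ∑ j, A i j * B i j := by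
  have hs : (((Real.sqrt 8 : ℝ) : ℂ))⁻¹ * (((Real.sqrt 8 : ℝ) : ℂ))⁻¹ = 1/8 := by
    rw [← mul_inv, ← Complex.ofReal_mul, Real.mul_self_sqrt (by norm_num)]; norm_num
  simp only [projME, Matrix.trace, Matrix.diag, Matrix.mul_apply, vecMulVec_apply, maxEnt,
    Fintype.sum_prod_type, Pi.star_apply, kroneckerMap_apply]
  simp only [apply_ite star, star_zero, ite_mul, mul_ite, zero_mul, mul_zero,
    Finset.sum_ite_eq, Finset.sum_ite_eq', Finset.mem_univ, if_true, Finset.sum_const_zero]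
  simp only [Finset.mul_sum]
  rw [Finset.sum_comm]
  simp only [← hs]
  simp
  rw [Finset.sum_comm]

lemma tr_phi (A B : Matrix (Fin 8) (Fin 8) ℂ) :
    trace (vecMulVec phi2 (star phi2) * (A ⊗ₖ B)) =
      (1/2) * (A 0 0 * B 0 0 + A 0 1 * B 0 1 + A 1 0 * B 1 0 + A 1 1 * B 1 1) := by
  have hs : (((Real.sqrt 2 : ℝ) : ℂ))⁻¹ * (((Real.sqrt 2 : ℝ) : ℂ))⁻¹ = 1/2 := by
    rw [← mul_inv, ← Complex.ofReal_mul, Real.mul_self_sqrt (by norm_num)]; norm_num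
  have hp : phi2 = Pi.single (0,0) (((Real.sqrt 2 : ℝ) : ℂ))⁻¹
      + Pi.single (1,1) (((Real.sqrt 2 : ℝ) : ℂ))⁻¹ := by
    ext ⟨i, j⟩
    fin_cases i <;> fin_cases j <;> simp [phi2, Pi.single_apply]
  rw [Matrix.vecMulVec_mul, Matrix.trace_vecMulVec, hp]
  simp [star_add, Matrix.add_vecMul, Matrix.single_vecMul, add_dotProduct, single_dotProduct]
  linear_combination (A 0 0 * B 0 0 + A 0 1 * B 0 1 + A 1 0 * B 1 0 + A 1 1 * B 1 1) * hs

lemma tr_obs (l : ℝ) (a b c d : ℂ) :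
    trace (rhoTilde l * (obsM a b ⊗ₖ obsM c d)) =
      l * (0.24 * ((2 * (a * c + b * d) + 6) / 8) + 0.76 * 36 / 64)
        + (1 - l) * (a * c + b * d) := by
  have h1 : trace (obsM a b) = 6 := by
    simp [Matrix.trace, Fin.sum_univ_eight, obsM]; norm_num
  have h2 : trace (obsM c d) = 6 := by
    simp [Matrix.trace, Fin.sum_univ_eight, obsM]; norm_num
  simp only [rhoTilde, isoState, add_mul, smul_mul_assoc, trace_add, trace_smul, one_mul,
    tr_phi, tr_max, trace_kronecker, h1, h2, smul_eq_mul]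
  simp [Fin.sum_univ_eight, obsM]
  ring

/-- Lemma 2: for `0 ≤ λ < 0.312`, the state `ρ̃(λ)` violates the CHSH
inequality under local projective measurements: there are ±1-valued observables
`A₀, A₁, B₀, B₁`, each a difference `P − Q` of orthogonal projections with `PQ = 0`,
whose CHSH value on `ρ̃(λ)` exceeds 2. -/
theorem rhoTilde_violates_CHSH (l : ℝ) (hl0 : 0 ≤ l) (hl1 : l < 0.312) :
    ∃ A₀ A₁ B₀ B₁ : Matrix (Fin 8) (Fin 8) ℂ,
      (∃ P Q : Matrix (Fin 8) (Fin 8) ℂ,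
        Pᴴ = P ∧ P * P = P ∧ Qᴴ = Q ∧ Q * Q = Q ∧ P * Q = 0 ∧ A₀ = P - Q) ∧
      (∃ P Q : Matrix (Fin 8) (Fin 8) ℂ,
        Pᴴ = P ∧ P * P = P ∧ Qᴴ = Q ∧ Q * Q = Q ∧ P * Q = 0 ∧ A₁ = P - Q) ∧
      (∃ P Q : Matrix (Fin 8) (Fin 8) ℂ,
        Pᴴ = P ∧ P * P = P ∧ Qᴴ = Q ∧ Q * Q = Q ∧ P * Q = 0 ∧ B₀ = P - Q) ∧
      (∃ P Q : Matrix (Fin 8) (Fin 8) ℂ,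
        Pᴴ = P ∧ P * P = P ∧ Qᴴ = Q ∧ Q * Q = Q ∧ P * Q = 0 ∧ B₁ = P - Q) ∧
      (2 : ℂ) < Matrix.trace
        (rhoTilde l * (A₀ ⊗ₖ B₀ + A₀ ⊗ₖ B₁ + A₁ ⊗ₖ B₀ - A₁ ⊗ₖ B₁)) := by
  refine ⟨obsM 1 0, obsM 0 1, obsM (4/5) (3/5), obsM (4/5) (-3/5),
    obs_proj _ (obsM_herm _ _ (by simp) (by simp)) (obsM_sq _ _ (by norm_num)),
    obs_proj _ (obsM_herm _ _ (by simp) (by simp)) (obsM_sq _ _ (by norm_num)),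
    obs_proj _ (obsM_herm _ _ (by simp) (by simp)) (obsM_sq _ _ (by norm_num)),
    obs_proj _ (obsM_herm _ _ (by simp) (by simp)) (obsM_sq _ _ (by norm_num)), ?_⟩
  simp only [mul_add, mul_sub, trace_add, trace_sub, tr_obs]
  have key : (2 : ℝ) < 2.8 - 1.417 * l := by norm_num at hl1 ⊢; linarith
  have key2 : ((2 : ℝ) : ℂ) < ((2.8 - 1.417 * l : ℝ) : ℂ) := by exact_mod_cast key
  convert key2 using 1
  · norm_num
  · push_cast
    ring
end

section
/- The isotropic state ρ^iso₈(0.24) on ℂ⁸⊗ℂ⁸ admits a local hidden variable model under local projective measurements: for all finite index sets X, Y and all finite families of projective measurements {M_{a|x}}_a on ℂ⁸ (x ∈ X) and {N_{b|y}}_b on ℂ⁸ (y ∈ Y), there exist a finite set Λ, weights q_μ ≥ 0 with Σ_μ q_μ = 1, and conditional probability distributions P(a|x,μ) and Q(b|y,μ) (nonnegative, summing to 1 over outcomes), such that Tr[(M_{a|x} ⊗ N_{b|y}) ρ^iso₈(0.24)] = Σ_μ q_μ P(a|x,μ) Q(b|y,μ) for all a, b, x, y. -/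
open Matrix
open scoped Kronecker ComplexOrder

/-- A projective measurement: a finite family of orthogonal projections, mutually
orthogonal, summing to the identity. -/
def IsProjMeasurement {n : Type*} [Fintype n] [DecidableEq n] {A : Type*} [Fintype A]
    (M : A → Matrix n n ℂ) : Prop :=
  (∀ a, (M a)ᴴ = M a) ∧ (∀ a, M a * M a = M a) ∧
    (∀ a a', a ≠ a' → M a * M a' = 0) ∧ ∑ a, M a = 1

section LHV8
open MeasureTheory ProbabilityTheory

lemma tail_int (t : ℝ) (ht : 0 ≤ t) :
    ∫ z : ℂ in {z : ℂ | t < ‖z‖ ^ 2}, Real.exp (-‖z‖ ^ 2 / 2) = 2 * Real.pi * Real.exp (-t / 2) := by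
  have hm : MeasurableSet {z : ℂ | t < ‖z‖ ^ 2} := measurableSet_lt (by fun_prop) (by fun_prop)
  rw [← integral_indicator hm, ← Complex.integral_comp_polarCoord_symm, polarCoord_target]
  have h1 : ∀ p : ℝ × ℝ, p.1 • ({z : ℂ | t < ‖z‖ ^ 2}.indicator (fun z : ℂ => Real.exp (-‖z‖ ^ 2 / 2))
      (Complex.polarCoord.symm p)) =
      ({r : ℝ | t < r ^ 2}.indicator (fun r => r * Real.exp (-r^2/2)) p.1) * 1 := by
    intro p
    simp only [Set.indicator, Set.mem_ofPred_eq, Complex.norm_polarCoord_symm, sq_abs, smul_eq_mul]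
    split_ifs <;> simp
  simp_rw [h1]
  rw [Measure.volume_eq_prod, setIntegral_prod_mul (μ := volume) (ν := volume)
    ({r : ℝ | t < r ^ 2}.indicator (fun r => r * Real.exp (-r^2/2))) (fun _ => (1:ℝ))
    (Set.Ioi 0) (Set.Ioo (-Real.pi) Real.pi)]
  have hm2 : MeasurableSet {r : ℝ | t < r ^ 2} := measurableSet_lt (by fun_prop) (by fun_prop)
  have h2 : ∫ r in Set.Ioi (0:ℝ), {r : ℝ | t < r ^ 2}.indicator (fun r => r * Real.exp (-r^2/2)) r
      = Real.exp (-t/2) := by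
    rw [setIntegral_indicator hm2]
    have : Set.Ioi (0:ℝ) ∩ {r : ℝ | t < r ^ 2} = Set.Ioi (Real.sqrt t) := by
      ext r
      simp only [Set.mem_inter_iff, Set.mem_Ioi, Set.mem_ofPred_eq]
      constructor
      · rintro ⟨h0, h⟩
        exact (Real.sqrt_lt' h0).2 h
      · intro h
        have h0 := lt_of_le_of_lt (Real.sqrt_nonneg t) h
        exact ⟨h0, (Real.sqrt_lt' h0).1 h⟩
    rw [this]
    have := integral_Ioi_of_hasDerivAt_of_nonneg' (a := Real.sqrt t) (l := 0)
      (g := fun r => -Real.exp (-r^2/2)) (g' := fun r => r * Real.exp (-r^2/2)) ?_ ?_ ?_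
    · rw [this, Real.sq_sqrt ht]; ring
    · intro x _
      have h : HasDerivAt (fun r : ℝ => -r^2/2) (-(2*x)/2) x := by
        have := ((hasDerivAt_pow 2 x).neg).div_const 2
        simpa using this
      have := h.exp.neg
      convert! this using 1
      ring
    · intro x hx
      have : 0 ≤ x := (Real.sqrt_nonneg t).trans (le_of_lt hx)
      positivity
    · rw [show (0:ℝ) = -0 by simp]
      apply Filter.Tendsto.neg
      apply Real.tendsto_exp_atBot.comp
      have : Filter.Tendsto (fun r : ℝ => r^2) Filter.atTop Filter.atTop :=
        Filter.tendsto_pow_atTop (by norm_num)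
      have h3 := (this.const_mul_atTop (show (0:ℝ) < 1/2 by norm_num))
      have h4 := Filter.tendsto_neg_atTop_atBot.comp h3
      refine h4.congr ?_
      intro x; simp; ring
  rw [h2]
  simp
  rw [max_eq_left (by positivity)]
  ring

lemma stdG_eq : stdGaussian ℂ = (volume : Measure ℂ).withDensity
    (fun z => ENNReal.ofReal (Real.exp (-‖z‖ ^ 2 / 2) / (2 * Real.pi))) := by
  have hint : Integrable (fun z : ℂ => Real.exp (-‖z‖ ^ 2 / 2)) := by
    by_contra h
    have := tail_int 0 le_rfl
    have h0 := setIntegral_eq_integral_of_ae_compl_eq_zero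
       (μ := (volume : Measure ℂ)) (s := {z : ℂ | 0 < ‖z‖ ^ 2}) (f := fun z : ℂ => Real.exp (-‖z‖ ^ 2 / 2)) (by
        have : ∀ᵐ z : ℂ, z ≠ 0 := by
          rw [ae_iff]; simp
        filter_upwards [this] with z hz h
        exact absurd (show 0 < ‖z‖ ^ 2 by positivity) h)
    rw [h0, integral_undef h] at this
    have := Real.pi_pos
    simp at *
  have hfin : IsFiniteMeasure ((volume : Measure ℂ).withDensity
    (fun z => ENNReal.ofReal (Real.exp (-‖z‖ ^ 2 / 2) / (2 * Real.pi)))) :=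
    isFiniteMeasure_withDensity_ofReal (hint.div_const _).2
  apply Measure.ext_of_charFun (E := ℂ)
  ext t
  rw [charFun_stdGaussian, charFun_apply, integral_withDensity_eq_integral_toReal_smul]
  · have := GaussianFourier.integral_cexp_neg_mul_sq_norm_add (V := ℂ) (b := 1/2) (by norm_num) Complex.I t
    have hpi : (Real.pi : ℂ) ≠ 0 := by exact_mod_cast Real.pi_ne_zero
    calc Complex.exp (-‖t‖^2/2) = (1/(2*Real.pi)) * (∫ v : ℂ, Complex.exp (-(1/2) * ‖v‖^2 + Complex.I * ((inner ℝ t v : ℝ) : ℂ))) := by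
          rw [this]
          simp
          field_simp
          congr 1
          ring
      _ = _ := by
          rw [← integral_const_mul]
          congr 1
          ext v
          rw [ENNReal.toReal_ofReal (by positivity), Complex.real_smul]
          push_cast
          rw [real_inner_comm, Complex.exp_add]
          field_simp
  · fun_prop
  · exact Filter.Eventually.of_forall (fun _ => ENNReal.ofReal_lt_top)

lemma tailG (t : ℝ) (ht : 0 ≤ t) :
    (stdGaussian ℂ).real {z : ℂ | t < ‖z‖ ^ 2} = Real.exp (-t / 2) := by
  have hm : MeasurableSet {z : ℂ | t < ‖z‖ ^ 2} := measurableSet_lt (by fun_prop) (by fun_prop)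
  rw [stdG_eq, Measure.real, withDensity_apply _ hm, ← integral_eq_lintegral_of_nonneg_ae]
  · rw [integral_div, tail_int t ht]
    field_simp
  · exact Filter.Eventually.of_forall (fun _ => by positivity)
  · exact Measurable.aestronglyMeasurable (by fun_prop)

noncomputable def gam : Measure (Fin 8 → ℂ) := Measure.pi (fun _ => stdGaussian ℂ)

instance : IsProbabilityMeasure gam := by unfold gam; infer_instance

lemma gam_map : gam.map (WithLp.toLp 2) = stdGaussian (EuclideanSpace ℂ (Fin 8)) := by
  apply Measure.ext_of_charFun (E := EuclideanSpace ℂ (Fin 8))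
  ext t
  simp_rw [gam, charFun_stdGaussian, charFun_pi, charFun_stdGaussian, ← Complex.exp_sum]
  congr 1
  rw [← Complex.ofReal_pow, EuclideanSpace.norm_sq_eq]
  push_cast
  simp [Finset.sum_div, neg_div]


lemma gam_inv (U : Matrix (Fin 8) (Fin 8) ℂ) (hU : Uᴴ * U = 1) :
    MeasurePreserving (fun z : Fin 8 → ℂ => U *ᵥ z) gam gam := by
  have hU' : U ∈ Matrix.unitaryGroup (Fin 8) ℂ := by
    rw [Matrix.mem_unitaryGroup_iff']; exact hU
  let L : EuclideanSpace ℂ (Fin 8) →ₗ[ℂ] EuclideanSpace ℂ (Fin 8) := Matrix.toEuclideanLin U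
  have hL : ∀ x, ‖L x‖ = ‖x‖ := by
    intro x
    have h : ∀ y : EuclideanSpace ℂ (Fin 8), ((‖y‖^2 : ℝ) : ℂ) = star (WithLp.ofLp y) ⬝ᵥ WithLp.ofLp y := by
      intro y
      rw [EuclideanSpace.norm_sq_eq, dotProduct]
      push_cast
      refine Finset.sum_congr rfl fun i _ => ?_
      simp [← Complex.normSq_eq_conj_mul_self, Complex.normSq_eq_norm_sq]
    have h2 : ((‖L x‖^2 : ℝ) : ℂ) = ((‖x‖^2 : ℝ) : ℂ) := by
      rw [h, h]
      change star (U *ᵥ WithLp.ofLp x) ⬝ᵥ (U *ᵥ WithLp.ofLp x) = _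
      rw [star_mulVec, ← dotProduct_mulVec, mulVec_mulVec, hU, one_mulVec]
    have h3 : ‖L x‖^2 = ‖x‖^2 := by exact_mod_cast h2
    exact (sq_eq_sq₀ (norm_nonneg _) (norm_nonneg _)).1 h3
  let I : EuclideanSpace ℂ (Fin 8) →ₗᵢ[ℝ] EuclideanSpace ℂ (Fin 8) :=
    ⟨L.restrictScalars ℝ, hL⟩
  let e := I.toLinearIsometryEquiv rfl
  have he := stdGaussian_map e
  refine ⟨by fun_prop, ?_⟩
  have hg : gam = (stdGaussian (EuclideanSpace ℂ (Fin 8))).map (WithLp.ofLp) := by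
    rw [← gam_map, Measure.map_map (by fun_prop) (by fun_prop)]
    change gam = gam.map id
    simp
  conv_lhs => rw [hg]
  rw [Measure.map_map (by fun_prop) (by fun_prop)]
  conv_rhs => rw [hg, ← he]
  rw [Measure.map_map (by fun_prop) (by fun_prop)]
  rfl

lemma gam_integral {F : Type*} [NormedAddCommGroup F] [NormedSpace ℝ F]
    (U : Matrix (Fin 8) (Fin 8) ℂ) (hU : Uᴴ * U = 1)
    (f : (Fin 8 → ℂ) → F) : ∫ z, f (U *ᵥ z) ∂gam = ∫ z, f z ∂gam := by
  have hU2 : U * Uᴴ = 1 := mul_eq_one_comm.1 hU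
  let e : (Fin 8 → ℂ) ≃ᵐ (Fin 8 → ℂ) :=
    { toFun := fun z => U *ᵥ z
      invFun := fun z => Uᴴ *ᵥ z
      left_inv := fun z => by simp [mulVec_mulVec, hU]
      right_inv := fun z => by simp [mulVec_mulVec, hU2]
      measurable_toFun := by change Measurable (fun z : Fin 8 → ℂ => U *ᵥ z); fun_prop
      measurable_invFun := by change Measurable (fun z : Fin 8 → ℂ => Uᴴ *ᵥ z); fun_prop }
  exact (gam_inv U hU).integral_comp e.measurableEmbedding f

lemma gam_memLp (j : Fin 8) : MemLp (fun z : Fin 8 → ℂ => z j) 2 gam := by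
  have h := IsGaussian.memLp_id (stdGaussian ℂ) 2 (by simp)
  have hp : MeasurePreserving (Function.eval j) gam (stdGaussian ℂ) :=
    measurePreserving_eval (fun _ : Fin 8 => stdGaussian ℂ) j
  exact h.comp_measurePreserving hp

lemma gam_int (j k : Fin 8) : Integrable (fun z : Fin 8 → ℂ => star (z j) * z k) gam :=
  MemLp.integrable_mul (gam_memLp j).star (gam_memLp k)

lemma gam_int_sq (j : Fin 8) : Integrable (fun z : Fin 8 → ℂ => ‖z j‖^2) gam :=
  (gam_memLp j).integrable_norm_pow (by norm_num)

lemma gam_sq (j : Fin 8) : ∫ z, ‖z j‖^2 ∂gam = 2 := by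
  have hp : MeasurePreserving (Function.eval j) gam (stdGaussian ℂ) :=
    measurePreserving_eval (fun _ : Fin 8 => stdGaussian ℂ) j
  rw [(gam_int_sq j).integral_eq_integral_meas_lt (Filter.Eventually.of_forall fun _ => by positivity)]
  have : ∀ t ∈ Set.Ioi (0:ℝ), gam.real {z : Fin 8 → ℂ | t < ‖z j‖^2} = Real.exp ((-1/2) * t) := by
    intro t ht
    have hm : MeasurableSet {z : ℂ | t < ‖z‖ ^ 2} := measurableSet_lt (by fun_prop) (by fun_prop)
    have := hp.measureReal_preimage hm.nullMeasurableSet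
    rw [tailG t (le_of_lt ht)] at this
    rw [show -1/2*t = -t/2 by ring, ← this]
    rfl
  rw [setIntegral_congr_fun measurableSet_Ioi this, integral_exp_mul_Ioi (by norm_num)]
  norm_num

noncomputable def mx (s : Fin 8 → ℝ) : ℝ := Finset.univ.sup' Finset.univ_nonempty s

lemma mx_lt (s : Fin 8 → ℝ) (t : ℝ) : t < mx s ↔ ∃ i, t < s i := by
  simp [mx, Finset.lt_sup'_iff]

lemma measurable_mx : Measurable mx := by
  apply measurable_of_Ioi
  intro t
  have : mx ⁻¹' Set.Ioi t = ⋃ i, {s | t < s i} := by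
    ext s; simp [mx_lt]
  rw [this]
  exact MeasurableSet.iUnion fun i => measurableSet_lt (by fun_prop) (by fun_prop)

lemma gam_mx_int : Integrable (fun z : Fin 8 → ℂ => mx (fun k => ‖z k‖^2)) gam := by
  have h : Integrable (fun z : Fin 8 → ℂ => ∑ k, ‖z k‖^2) gam :=
    integrable_finsetSum _ fun k _ => gam_int_sq k
  refine h.mono' ?_ ?_
  · exact (measurable_mx.comp (by fun_prop)).aestronglyMeasurable
  · refine Filter.Eventually.of_forall fun z => ?_
    have h0 : 0 ≤ mx (fun k => ‖z k‖^2) := by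
      refine le_trans (by positivity : 0 ≤ ‖z 0‖^2) ?_
      exact Finset.le_sup' (fun k => ‖z k‖^2) (Finset.mem_univ 0)
    rw [Real.norm_of_nonneg h0]
    apply Finset.sup'_le
    intro i _
    exact Finset.single_le_sum (f := fun k => ‖z k‖^2) (fun k _ => by positivity) (Finset.mem_univ i)

lemma gam_mx : ∫ z, mx (fun k => ‖z k‖^2) ∂gam = 761/140 := by
  rw [gam_mx_int.integral_eq_integral_meas_lt (Filter.Eventually.of_forall fun z => by
      refine le_trans (by positivity : 0 ≤ ‖z 0‖^2) ?_
      exact Finset.le_sup' (fun k => ‖z k‖^2) (Finset.mem_univ 0))]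
  have : ∀ t ∈ Set.Ioi (0:ℝ), gam.real {z : Fin 8 → ℂ | t < mx (fun k => ‖z k‖^2)} =
      ∑ m : Fin 8, (-1)^(m:ℕ) * (Nat.choose 8 (m+1)) * Real.exp ((-((m:ℕ)+1:ℝ)/2) * t) := by
    intro t ht
    have hm : MeasurableSet {z : ℂ | t < ‖z‖ ^ 2} := measurableSet_lt (by fun_prop) (by fun_prop)
    have hset : {z : Fin 8 → ℂ | t < mx (fun k => ‖z k‖^2)} =
       (Set.univ.pi (fun _ : Fin 8 => {z : ℂ | t < ‖z‖ ^ 2}ᶜ))ᶜ := by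
      ext z
      simp [mx_lt]
    have h1 : gam.real (Set.univ.pi (fun _ : Fin 8 => {z : ℂ | t < ‖z‖ ^ 2}ᶜ)) = (1 - Real.exp (-t/2))^8 := by
      rw [gam, Measure.real, Measure.pi_pi, ENNReal.toReal_prod]
      have : ((stdGaussian ℂ) {z : ℂ | t < ‖z‖ ^ 2}ᶜ).toReal = 1 - Real.exp (-t/2) := by
        have := probReal_compl_eq_one_sub (μ := stdGaussian ℂ) hm
        rw [tailG t (le_of_lt ht)] at this
        exact this
      simp [this]
    rw [hset, probReal_compl_eq_one_sub (MeasurableSet.univ_pi fun _ => hm.compl), h1]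
    have he : ∀ m : ℕ, Real.exp ((-((m:ℕ)+1:ℝ)/2) * t) = Real.exp (-t/2)^(m+1) := by
      intro m
      rw [← Real.exp_nat_mul]
      congr 1
      push_cast; ring
    simp_rw [he]
    simp [Fin.sum_univ_succ, Nat.choose]
    ring
  rw [setIntegral_congr_fun measurableSet_Ioi this, integral_finsetSum]
  · have h2 : ∀ m : Fin 8, ∫ t in Set.Ioi (0:ℝ), (-1)^(m:ℕ) * (Nat.choose 8 (m+1)) * Real.exp ((-((m:ℕ)+1:ℝ)/2) * t)
      = (-1)^(m:ℕ) * (Nat.choose 8 (m+1)) * (2/((m:ℕ)+1:ℝ)) := by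
      intro m
      have hneg : (-((m:ℕ)+1:ℝ)/2) < 0 := by
        have : (0:ℝ) ≤ (m:ℕ) := by positivity
        linarith
      rw [integral_const_mul, integral_exp_mul_Ioi hneg]
      congr 1
      simp
      have : ((m:ℕ):ℝ)+1 ≠ 0 := by positivity
      field_simp
      rw [show (-1 + -((m:ℕ):ℝ)) = -(((m:ℕ):ℝ)+1) by ring, div_neg, neg_neg, div_self this]
    simp_rw [h2]
    simp [Fin.sum_univ_succ, Nat.choose]
    norm_num
  · intro m _
    have hneg : (-((m:ℕ)+1:ℝ)/2) < 0 := by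
        have : (0:ℝ) ≤ (m:ℕ) := by positivity
        linarith
    exact (integrableOn_exp_mul_Ioi hneg 0).const_mul _


/-- Tie-broken argmax weights. -/
noncomputable def wt (s : Fin 8 → ℝ) (i : Fin 8) : ℝ :=
  (if mx s ≤ s i then 1 else 0) / ∑ j, (if mx s ≤ s j then (1:ℝ) else 0)

lemma wt_den_pos (s : Fin 8 → ℝ) : 0 < ∑ j, (if mx s ≤ s j then (1:ℝ) else 0) := by
  obtain ⟨i, _, hi⟩ := Finset.exists_mem_eq_sup' (Finset.univ_nonempty (α := Fin 8)) s
  refine Finset.sum_pos' (fun j _ => by split_ifs <;> norm_num) ⟨i, Finset.mem_univ _, ?_⟩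
  rw [if_pos (by rw [mx, hi])]; norm_num

lemma wt_nonneg (s : Fin 8 → ℝ) (i : Fin 8) : 0 ≤ wt s i := by
  unfold wt
  exact div_nonneg (by split_ifs <;> norm_num) (wt_den_pos s).le

lemma wt_sum (s : Fin 8 → ℝ) : ∑ i, wt s i = 1 := by
  unfold wt
  rw [← Finset.sum_div, div_self (wt_den_pos s).ne']

lemma wt_le (s : Fin 8 → ℝ) (i : Fin 8) : wt s i ≤ 1 := by
  rw [← wt_sum s]
  exact Finset.single_le_sum (fun k _ => wt_nonneg s k) (Finset.mem_univ i)

lemma wt_mul (s : Fin 8 → ℝ) (i : Fin 8) : wt s i * s i = wt s i * mx s := by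
  unfold wt
  split_ifs with h
  · have : s i ≤ mx s := Finset.le_sup' s (Finset.mem_univ i)
    rw [le_antisymm this h]
  · simp

lemma mx_perm (s : Fin 8 → ℝ) (σ : Equiv.Perm (Fin 8)) : mx (fun k => s (σ k)) = mx s := by
  apply le_antisymm
  · exact Finset.sup'_le _ _ fun i _ => Finset.le_sup' s (Finset.mem_univ (σ i))
  · refine Finset.sup'_le _ _ fun i _ => ?_
    have := Finset.le_sup' (fun k => s (σ k)) (Finset.mem_univ (σ.symm i))
    rw [Equiv.apply_symm_apply] at this
    exact this

lemma wt_perm (s : Fin 8 → ℝ) (σ : Equiv.Perm (Fin 8)) (i : Fin 8) :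
    wt (fun k => s (σ k)) i = wt s (σ i) := by
  unfold wt
  rw [mx_perm]
  congr 1
  exact Equiv.sum_comp σ (fun j => if mx s ≤ s j then (1:ℝ) else 0)

lemma measurable_wt (i : Fin 8) : Measurable (fun s => wt s i) := by
  have h : ∀ j : Fin 8, Measurable (fun s : Fin 8 → ℝ => if mx s ≤ s j then (1:ℝ) else 0) := fun j =>
    Measurable.ite (measurableSet_le measurable_mx (measurable_pi_apply j)) measurable_const measurable_const
  unfold wt
  exact (h i).div (Finset.measurable_fun_sum _ fun j _ => h j)

/-- bounded measurable weights keep integrability -/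
lemma int_bdd {c : (Fin 8 → ℂ) → ℝ} (hc : Measurable c) (h0 : ∀ z, 0 ≤ c z) (h1 : ∀ z, c z ≤ 1)
    {f : (Fin 8 → ℂ) → ℂ} (hf : Integrable f gam) : Integrable (fun z => (c z : ℂ) * f z) gam := by
  refine hf.bdd_mul (c := 1) ?_ ?_
  · exact (Complex.measurable_ofReal.comp hc).aestronglyMeasurable
  · refine Filter.Eventually.of_forall fun z => ?_
    rw [Complex.norm_real, Real.norm_of_nonneg (h0 z)]
    exact h1 z

noncomputable def nsq (z : Fin 8 → ℂ) : Fin 8 → ℝ := fun k => ‖z k‖^2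

lemma measurable_nsq : Measurable nsq := by unfold nsq; fun_prop

noncomputable def TT (i j k : Fin 8) : ℂ := ∫ z, (wt (nsq z) i : ℂ) * (star (z j) * z k) ∂gam

lemma TT_int (i j k : Fin 8) : Integrable (fun z => (wt (nsq z) i : ℂ) * (star (z j) * z k)) gam :=
  int_bdd ((measurable_wt i).comp measurable_nsq) (fun _ => wt_nonneg _ _) (fun _ => wt_le _ _) (gam_int j k)

lemma TT_off (i j k : Fin 8) (h : j ≠ k) : TT i j k = 0 := by
  let d : Fin 8 → ℂ := fun l => if l = j then -1 else 1
  have hU : (diagonal d)ᴴ * diagonal d = 1 := by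
    rw [diagonal_conjTranspose, diagonal_mul_diagonal, ← diagonal_one]
    congr 1; ext l; simp only [d, Pi.star_apply]; split_ifs <;> simp
  have := gam_integral (diagonal d) hU (fun z => (wt (nsq z) i : ℂ) * (star (z j) * z k))
  have h2 : ∀ z : Fin 8 → ℂ, (wt (nsq (diagonal d *ᵥ z)) i : ℂ) * (star ((diagonal d *ᵥ z) j) * (diagonal d *ᵥ z) k)
     = - ((wt (nsq z) i : ℂ) * (star (z j) * z k)) := by
    intro z
    have h3 : nsq (diagonal d *ᵥ z) = nsq z := by
      ext l; simp only [nsq, mulVec_diagonal, d]; split_ifs <;> simp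
    rw [h3]
    simp [mulVec_diagonal, d, h.symm]
  simp_rw [h2] at this
  rw [integral_neg] at this
  change -TT i j k = TT i j k at this
  exact self_eq_neg.1 this.symm

lemma TT_perm (σ : Equiv.Perm (Fin 8)) (i j : Fin 8) : TT i j j = TT (σ i) (σ j) (σ j) := by
  let U : Matrix (Fin 8) (Fin 8) ℂ := (1 : Matrix (Fin 8) (Fin 8) ℂ).submatrix σ id
  have hUz : ∀ z, U *ᵥ z = fun k => z (σ k) := by
    intro z; ext k
    simp [U, mulVec, dotProduct, Matrix.one_apply]
  have hU : Uᴴ * U = 1 := by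
    rw [mul_eq_one_comm]
    ext a b
    simp [U, Matrix.mul_apply, Matrix.one_apply]
  have := gam_integral U hU (fun z => (wt (nsq z) i : ℂ) * (star (z j) * z j))
  rw [TT, ← this]
  unfold TT
  congr 1
  ext z
  rw [hUz]
  have : nsq (fun k => z (σ k)) = fun k => nsq z (σ k) := rfl
  rw [this, wt_perm]

noncomputable def al : ℝ := 761/1120
noncomputable def be : ℝ := (2 - al)/7

lemma starmul (x : ℂ) : star x * x = ((‖x‖^2 : ℝ) : ℂ) := by
  rw [Complex.star_def, ← Complex.normSq_eq_conj_mul_self, Complex.normSq_eq_norm_sq]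

lemma TT_al (i : Fin 8) : TT i i i = al := by
  have h1 : ∀ i, TT i i i = TT 0 0 0 := fun i => by
    have := TT_perm (Equiv.swap i 0) i i
    simpa using this
  have h2 : ∑ i, TT i i i = ((761/140 : ℝ) : ℂ) := by
    unfold TT
    rw [← integral_finsetSum _ (fun i _ => TT_int i i i), ← gam_mx, ← integral_complex_ofReal]
    congr 1
    ext z
    have : ∀ i, (wt (nsq z) i : ℂ) * (star (z i) * z i) = ((wt (nsq z) i * mx (nsq z) : ℝ) : ℂ) := by
      intro i
      rw [← wt_mul, starmul]; simp [nsq]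
    simp_rw [this]
    rw [← Complex.ofReal_sum, ← Finset.sum_mul, wt_sum, one_mul]
    rfl
  rw [h1]
  simp_rw [h1] at h2
  simp at h2
  rw [al]
  push_cast
  linear_combination h2 / 8

lemma TT_sum (i : Fin 8) : ∑ j, TT i j j = 2 := by
  have h1 : ∀ i, ∑ j, TT i j j = ∑ j, TT 0 j j := fun i => by
    rw [← Equiv.sum_comp (Equiv.swap i 0) (fun j => TT 0 j j)]
    refine Finset.sum_congr rfl fun j _ => ?_
    rw [TT_perm (Equiv.swap i 0) i j]; simp
  have h2 : ∑ i, ∑ j, TT i j j = ((16:ℝ):ℂ) := by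
    rw [Finset.sum_comm]
    have : ∀ j, ∑ i, TT i j j = ((2:ℝ):ℂ) := by
      intro j
      unfold TT
      rw [← integral_finsetSum _ (fun i _ => TT_int i j j), ← gam_sq j, ← integral_complex_ofReal]
      congr 1
      ext z
      rw [← Finset.sum_mul, ← Complex.ofReal_sum, wt_sum, starmul]
      simp
    simp_rw [this]
    simp; norm_num
  rw [h1]
  simp_rw [fun i => h1 i] at h2
  simp at h2
  linear_combination h2 / 8

lemma TT_be (i j : Fin 8) (h : i ≠ j) : TT i j j = be := by
  have h1 : ∀ j, i ≠ j → ∀ k, i ≠ k → TT i j j = TT i k k := fun j hj k hk => by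
    have := TT_perm (Equiv.swap j k) i j
    rw [Equiv.swap_apply_of_ne_of_ne hj hk] at this
    simpa using this
  have h2 := TT_sum i
  rw [← Finset.add_sum_erase _ _ (Finset.mem_univ i), TT_al,
    Finset.sum_congr rfl (fun k hk => h1 k (Finset.ne_of_mem_erase hk).symm j h)] at h2
  simp at h2
  rw [be]; push_cast
  linear_combination h2 / 7

lemma TT_eq (i j k : Fin 8) : TT i j k = if j = k then (if i = j then (al:ℂ) else be) else 0 := by
  split_ifs with h1 h2
  · subst h1; subst h2; exact TT_al _
  · subst h1; exact TT_be _ _ h2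
  · exact TT_off _ _ _ h1

lemma quad_expand (K : Matrix (Fin 8) (Fin 8) ℂ) (z : Fin 8 → ℂ) :
    star z ⬝ᵥ K *ᵥ z = ∑ j, ∑ k, K j k * (star (z j) * z k) := by
  simp only [dotProduct, mulVec, Finset.mul_sum, Pi.star_apply]
  refine Finset.sum_congr rfl fun j _ => Finset.sum_congr rfl fun k _ => by ring

lemma quad_int (K : Matrix (Fin 8) (Fin 8) ℂ) : Integrable (fun z => star z ⬝ᵥ K *ᵥ z) gam := by
  simp_rw [quad_expand]
  exact integrable_finsetSum _ fun j _ => integrable_finsetSum _ fun k _ => (gam_int j k).const_mul _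

lemma core1 (i : Fin 8) (K : Matrix (Fin 8) (Fin 8) ℂ) :
    ∫ z, (wt (nsq z) i : ℂ) * (star z ⬝ᵥ K *ᵥ z) ∂gam = (al - be) * K i i + be * K.trace := by
  have : ∀ z : Fin 8 → ℂ, (wt (nsq z) i : ℂ) * (star z ⬝ᵥ K *ᵥ z) =
     ∑ j, ∑ k, K j k * ((wt (nsq z) i : ℂ) * (star (z j) * z k)) := by
    intro z
    rw [quad_expand]
    simp_rw [Finset.mul_sum]
    refine Finset.sum_congr rfl fun j _ => Finset.sum_congr rfl fun k _ => by ring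
  simp_rw [this]
  rw [integral_finsetSum]
  swap
  · exact fun j _ => integrable_finsetSum _ fun k _ => (TT_int i j k).const_mul (K j k)
  have h2 : ∀ j, ∫ z, ∑ k, K j k * ((wt (nsq z) i : ℂ) * (star (z j) * z k)) ∂gam = 
     K j j * (if i = j then (al:ℂ) else be) := by
    intro j
    rw [integral_finsetSum]
    swap
    · exact fun k _ => (TT_int i j k).const_mul (K j k)
    simp_rw [integral_const_mul]
    change ∑ k, K j k * TT i j k = _
    simp_rw [TT_eq]
    simp
  simp_rw [h2]
  have h3 : ∀ j, K j j * (if i = j then (al:ℂ) else be) = (if i = j then (al - be) * K j j else 0) + be * K j j := by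
    intro j; split_ifs <;> ring
  simp_rw [h3, Finset.sum_add_distrib, Finset.sum_ite_eq, ← Finset.mul_sum]
  simp [Matrix.trace]

lemma core2 (U : Matrix (Fin 8) (Fin 8) ℂ) (hU : Uᴴ * U = 1) (i : Fin 8) (K : Matrix (Fin 8) (Fin 8) ℂ) :
    ∫ z, (wt (nsq (U *ᵥ z)) i : ℂ) * (star z ⬝ᵥ K *ᵥ z) ∂gam = (al - be) * (U * K * Uᴴ) i i + be * K.trace := by
  have h := gam_integral U hU (fun z => (wt (nsq z) i : ℂ) * (star z ⬝ᵥ (U * K * Uᴴ) *ᵥ z))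
  rw [core1] at h
  have ht : (U * K * Uᴴ).trace = K.trace := by
    rw [Matrix.trace_mul_comm, ← Matrix.mul_assoc, hU, Matrix.one_mul]
  rw [ht] at h
  rw [← h]
  congr 1
  ext z
  congr 1
  rw [star_mulVec, ← dotProduct_mulVec, mulVec_mulVec, mulVec_mulVec]
  congr 2
  rw [← Matrix.mul_assoc, ← Matrix.mul_assoc, hU, Matrix.one_mul, Matrix.mul_assoc, hU, Matrix.mul_one]

lemma proj_diag {A : Type} [Fintype A] (M : A → Matrix (Fin 8) (Fin 8) ℂ) (hM : IsProjMeasurement M) :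
    ∃ (U : Matrix (Fin 8) (Fin 8) ℂ) (g : Fin 8 → A), Uᴴ * U = 1 ∧
      ∀ a, ∃ D : Fin 8 → ℂ, (∀ i, (g i = a → D i = 1) ∧ (g i ≠ a → D i = 0)) ∧ M a = Uᴴ * diagonal D * U := by
  classical
  obtain ⟨h1, h2, h3, h4⟩ := hM
  let c : A → ℝ := fun a => ((Fintype.equivFin A a : ℕ) : ℝ)
  have hc : Function.Injective c := by
    intro a b h
    have : (Fintype.equivFin A a : ℕ) = (Fintype.equivFin A b : ℕ) :=
      Nat.cast_injective (R := ℝ) h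
    exact (Fintype.equivFin A).injective (Fin.ext this)
  let H : Matrix (Fin 8) (Fin 8) ℂ := ∑ a, (c a : ℂ) • M a
  have hH : H.IsHermitian := by
    simp [H, Matrix.IsHermitian, Matrix.conjTranspose_sum, h1]
  have hMH : ∀ a, M a * H = (c a : ℂ) • M a := by
    intro a
    simp only [H, Matrix.mul_sum, Matrix.mul_smul]
    rw [Finset.sum_eq_single a]
    · rw [h2]
    · intro b _ hb; rw [h3 a b hb.symm, smul_zero]
    · simp
  let v : Fin 8 → Fin 8 → ℂ := fun i => ⇑(hH.eigenvectorBasis i)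
  have hv : ∀ i, H *ᵥ v i = (hH.eigenvalues i : ℂ) • v i := fun i => by
    have := hH.mulVec_eigenvectorBasis i
    simpa using this
  have hv0 : ∀ i, v i ≠ 0 := by
    intro i h
    have h5 := hH.eigenvectorBasis.orthonormal.1 i
    have : hH.eigenvectorBasis i = 0 := by
      ext k; exact congrFun h k
    rw [this] at h5; simp at h5
  have hMv : ∀ a i, (c a : ℂ) • (M a *ᵥ v i) = (hH.eigenvalues i : ℂ) • (M a *ᵥ v i) := by
    intro a i
    rw [← smul_mulVec, ← hMH, ← mulVec_mulVec, hv, mulVec_smul]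
  have hs : ∀ i, ∑ a, M a *ᵥ v i = v i := by
    intro i; rw [← Matrix.sum_mulVec, h4, one_mulVec]
  have hex : ∀ i, ∃ a, M a *ᵥ v i ≠ 0 := by
    intro i
    by_contra! h
    have := hs i
    simp [h] at this
    exact hv0 i this.symm
  choose g hg using hex
  have hcg : ∀ i, (c (g i) : ℂ) = hH.eigenvalues i := by
    intro i
    have := hMv (g i) i
    rw [← sub_eq_zero, ← sub_smul, smul_eq_zero] at this
    rcases this with h | h
    · exact sub_eq_zero.1 h
    · exact absurd h (hg i)
  have hz : ∀ a i, g i ≠ a → M a *ᵥ v i = 0 := by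
    intro a i hne
    have := hMv a i
    rw [← sub_eq_zero, ← sub_smul, smul_eq_zero, ← hcg] at this
    rcases this with h | h
    · have : c a = c (g i) := by exact_mod_cast sub_eq_zero.1 h
      exact absurd (hc this).symm hne
    · exact h
  have ho : ∀ i, M (g i) *ᵥ v i = v i := by
    intro i
    conv_rhs => rw [← hs i]
    rw [Finset.sum_eq_single (g i)]
    · intro b _ hb; exact hz b i hb.symm
    · simp
  let V : Matrix (Fin 8) (Fin 8) ℂ := hH.eigenvectorUnitary
  have hV1 : Vᴴ * V = 1 := Unitary.coe_star_mul_self hH.eigenvectorUnitary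
  have hV2 : V * Vᴴ = 1 := mul_eq_one_comm.1 hV1
  refine ⟨Vᴴ, g, by simpa using hV2, fun a => ⟨fun i => if g i = a then 1 else 0, fun i => by
    constructor <;> intro h <;> simp [h], ?_⟩⟩
  have key : M a * V = V * diagonal (fun i => if g i = a then (1:ℂ) else 0) := by
    ext k i
    rw [mul_diagonal]
    have e1 : (M a * V) k i = (M a *ᵥ v i) k := rfl
    have e2 : V k i = v i k := rfl
    rw [e1, e2]
    split_ifs with h
    · rw [← h, ho]; simp
    · rw [hz a i h]; simp
  rw [conjTranspose_conjTranspose, ← key, Matrix.mul_assoc, hV2, Matrix.mul_one]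


lemma quad_total (K : Matrix (Fin 8) (Fin 8) ℂ) : ∫ z, (star z ⬝ᵥ K *ᵥ z) ∂gam = 2 * K.trace := by
  have h : ∀ z : Fin 8 → ℂ, star z ⬝ᵥ K *ᵥ z = ∑ i, (wt (nsq z) i : ℂ) * (star z ⬝ᵥ K *ᵥ z) := by
    intro z
    rw [← Finset.sum_mul, ← Complex.ofReal_sum, wt_sum]; simp
  rw [integral_congr_ae (Filter.Eventually.of_forall h), integral_finsetSum]
  · simp_rw [core1]
    rw [Finset.sum_add_distrib, ← Finset.mul_sum]
    change (al - be) * K.trace + _ = _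
    simp [al, be]
    ring
  · intro i _
    exact int_bdd ((measurable_wt i).comp measurable_nsq) (fun _ => wt_nonneg _ _) (fun _ => wt_le _ _) (quad_int K)

lemma response {A : Type} [Fintype A] (M : A → Matrix (Fin 8) (Fin 8) ℂ) (hM : IsProjMeasurement M) :
    ∃ R : A → (Fin 8 → ℂ) → ℝ, (∀ a, Measurable (R a)) ∧ (∀ a z, 0 ≤ R a z) ∧ (∀ z, ∑ a, R a z = 1) ∧
      ∀ a K, ∫ z, (R a z : ℂ) * (star z ⬝ᵥ K *ᵥ z) ∂gam =
        (al - be) * ((M a)ᵀ * K).trace + be * (M a).trace * K.trace := by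
  classical
  have hM' : IsProjMeasurement (fun a => (M a)ᵀ) := by
    obtain ⟨h1, h2, h3, h4⟩ := hM
    refine ⟨fun a => ?_, fun a => ?_, fun a b hab => ?_, ?_⟩
    · change ((M a)ᵀ)ᴴ = (M a)ᵀ
      conv_rhs => rw [← h1 a]
      rfl
    · rw [← transpose_mul, h2]
    · rw [← transpose_mul, h3 b a hab.symm, transpose_zero]
    · rw [← transpose_sum, h4, transpose_one]
  obtain ⟨U, g, hU, hD⟩ := proj_diag _ hM'
  have hwm : ∀ i, Measurable (fun z => wt (nsq (U *ᵥ z)) i) := fun i => by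
    have h1 : Measurable (fun z : Fin 8 → ℂ => U *ᵥ z) := by fun_prop
    exact (measurable_wt i).comp (measurable_nsq.comp h1)
  refine ⟨fun a z => ∑ i, if g i = a then wt (nsq (U *ᵥ z)) i else 0, fun a => ?_, fun a z => ?_, fun z => ?_, fun a K => ?_⟩
  · refine Finset.measurable_fun_sum _ fun i _ => ?_
    split_ifs
    · exact hwm i
    · exact measurable_const
  · exact Finset.sum_nonneg fun i _ => by
      split_ifs
      · exact wt_nonneg _ _
      · exact le_rfl
  · rw [Finset.sum_comm]
    simp [wt_sum]
  · obtain ⟨D, hD1, hD2⟩ := hD a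
    have h1 : ∀ z : Fin 8 → ℂ, ((∑ i, if g i = a then wt (nsq (U *ᵥ z)) i else 0 : ℝ) : ℂ) * (star z ⬝ᵥ K *ᵥ z)
      = ∑ i, D i * ((wt (nsq (U *ᵥ z)) i : ℂ) * (star z ⬝ᵥ K *ᵥ z)) := by
      intro z
      rw [Complex.ofReal_sum, Finset.sum_mul]
      refine Finset.sum_congr rfl fun i _ => ?_
      by_cases h : g i = a
      · rw [if_pos h, (hD1 i).1 h, one_mul]
      · rw [if_neg h, (hD1 i).2 h]; simp
    rw [integral_congr_ae (Filter.Eventually.of_forall h1), integral_finsetSum]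
    swap
    · intro i _
      exact (int_bdd (hwm i) (fun _ => wt_nonneg _ _) (fun _ => wt_le _ _) (quad_int K)).const_mul (D i)
    simp_rw [integral_const_mul, core2 U hU]
    have h2 : ((M a)ᵀ * K).trace = ∑ i, D i * (U * K * Uᴴ) i i := by
      rw [hD2, Matrix.mul_assoc, Matrix.mul_assoc, Matrix.trace_mul_comm, Matrix.mul_assoc]
      simp [Matrix.trace, diagonal_mul]
    have h3 : (M a).trace = ∑ i, D i := by
      rw [← Matrix.trace_transpose, hD2, Matrix.mul_assoc, Matrix.trace_mul_comm, Matrix.mul_assoc,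
        mul_eq_one_comm.1 hU]
      simp [Matrix.trace]
    rw [h2, h3, Finset.mul_sum, Finset.mul_sum, Finset.sum_mul, ← Finset.sum_add_distrib]
    refine Finset.sum_congr rfl fun i _ => by ring

lemma iso_trace (M N : Matrix (Fin 8) (Fin 8) ℂ) :
    Matrix.trace ((M ⊗ₖ N) * isoState 8 0.24) = (3/100) * (Mᵀ * N).trace + (19/1600) * M.trace * N.trace := by
  have h1 : ((M ⊗ₖ N) * projME 8).trace = (1/8) * (Mᵀ * N).trace := by
    rw [projME, Matrix.mul_vecMulVec, Matrix.trace_vecMulVec]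
    have hs : ((1 / Real.sqrt 8 : ℝ) : ℂ) * ((1 / Real.sqrt 8 : ℝ) : ℂ) = 1/8 := by
      rw [← Complex.ofReal_mul, div_mul_div_comm, Real.mul_self_sqrt (by norm_num)]
      norm_num
    have h2 : ∀ p : Fin 8 × Fin 8, ((M ⊗ₖ N) *ᵥ maxEnt 8) p = ∑ j, M p.1 j * N p.2 j * ((1 / Real.sqrt 8 : ℝ) : ℂ) := by
      intro p
      simp only [mulVec, dotProduct, Fintype.sum_prod_type, maxEnt, kroneckerMap_apply]
      simp
    simp only [dotProduct, Fintype.sum_prod_type, h2]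
    simp only [Pi.star_apply, maxEnt]
    have h3 : ∀ i j : Fin 8, star (if i = j then ((1 / Real.sqrt (8:ℕ) : ℝ) : ℂ) else 0) = 
       if i = j then ((1 / Real.sqrt 8 : ℝ) : ℂ) else 0 := by
      intro i j
      split_ifs
      · rw [Complex.star_def, Complex.conj_ofReal]; norm_num
      · simp
    simp only [h3, mul_ite, mul_zero, Finset.sum_ite_eq, Finset.mem_univ, if_true]
    simp only [Matrix.trace, Matrix.diag, Matrix.mul_apply, transpose_apply]
    rw [Finset.sum_comm' (t' := Finset.univ) (s' := fun _ => Finset.univ) (by simp)]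
    rw [Finset.mul_sum]
    refine Finset.sum_congr rfl fun i _ => ?_
    rw [Finset.sum_mul, Finset.mul_sum]
    refine Finset.sum_congr rfl fun j _ => ?_
    rw [mul_assoc, hs]; ring
  rw [isoState, Matrix.mul_add, Matrix.trace_add, Matrix.mul_smul, Matrix.mul_smul, Matrix.trace_smul,
    Matrix.trace_smul, h1, Matrix.mul_one, Matrix.trace_kronecker]
  simp only [smul_eq_mul]
  push_cast
  ring

lemma quad_proj (N : Matrix (Fin 8) (Fin 8) ℂ) (h1 : Nᴴ = N) (h2 : N * N = N) (z : Fin 8 → ℂ) :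
    star z ⬝ᵥ N *ᵥ z = ((∑ k, ‖(N *ᵥ z) k‖^2 : ℝ) : ℂ) := by
  have : star z ⬝ᵥ N *ᵥ z = star (N *ᵥ z) ⬝ᵥ (N *ᵥ z) := by
    rw [star_mulVec, ← dotProduct_mulVec, mulVec_mulVec, h1, h2]
  rw [this, dotProduct]
  push_cast
  refine Finset.sum_congr rfl fun i _ => ?_
  rw [Pi.star_apply, starmul]; push_cast; rfl

lemma trace_proj (N : Matrix (Fin 8) (Fin 8) ℂ) (h1 : Nᴴ = N) (h2 : N * N = N) :
    0 ≤ N.trace.re ∧ N.trace = (N.trace.re : ℂ) := by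
  have : N.trace = ((∑ i, ∑ j, ‖N j i‖^2 : ℝ) : ℂ) := by
    conv_lhs => rw [← h2]
    conv_lhs => enter [1, 1]; rw [← h1]
    simp only [Matrix.trace, Matrix.diag, Matrix.mul_apply, conjTranspose_apply, starmul]
    push_cast; rfl
  rw [this]
  refine ⟨?_, by simp only [Complex.ofReal_re]⟩
  rw [Complex.ofReal_re]
  positivity

lemma marg {X A : Type} [Fintype X] [Fintype A] [DecidableEq X] [DecidableEq A] (r : X → A → ℝ)
    (h : ∀ x, ∑ a, r x a = 1) (x : X) (a : A) :
    ∑ f : X → A, (if f x = a then 1 else 0) * ∏ x', r x' (f x') = r x a := by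
  have h1 : ∀ f : X → A, (if f x = a then 1 else 0) * ∏ x', r x' (f x') =
     ∏ x', (if x' = x then (if f x' = a then r x' (f x') else 0) else r x' (f x')) := by
    intro f
    split_ifs with hf
    · rw [one_mul]
      refine Finset.prod_congr rfl fun x' _ => ?_
      by_cases hx : x' = x
      · subst hx; simp [hf]
      · simp [hx]
    · rw [zero_mul]
      symm
      exact Finset.prod_eq_zero (Finset.mem_univ x) (by simp [hf])
  simp_rw [h1]
  have h2 := Finset.prod_univ_sum (fun _ : X => (Finset.univ : Finset A))
    (fun x' a' => (if x' = x then (if a' = a then r x' a' else 0) else r x' a'))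
  rw [Fintype.piFinset_univ] at h2
  rw [← h2, Finset.prod_eq_single x]
  · simp
  · intro b _ hb; simp [hb, h]
  · simp

lemma tot {X A : Type} [Fintype X] [Fintype A] [DecidableEq X] (r : X → A → ℝ)
    (h : ∀ x, ∑ a, r x a = 1) :
    ∑ f : X → A, ∏ x', r x' (f x') = 1 := by
  have h2 := Finset.prod_univ_sum (fun _ : X => (Finset.univ : Finset A)) r
  rw [Fintype.piFinset_univ] at h2
  rw [← h2]; simp [h]

lemma main_generic (X Y A B : Type) [Fintype X] [Fintype Y] [Fintype A] [Fintype B]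
      (M : X → A → Matrix (Fin 8) (Fin 8) ℂ) (N : Y → B → Matrix (Fin 8) (Fin 8) ℂ)
      (hM : ∀ x, IsProjMeasurement (M x)) (hN : ∀ y, IsProjMeasurement (N y)) :
      ∃ (Λ : Type) (_ : Fintype Λ) (q : Λ → ℝ) (P : A → X → Λ → ℝ) (Q : B → Y → Λ → ℝ),
        (∀ μ, 0 ≤ q μ) ∧ (∑ μ, q μ = 1) ∧
        (∀ a x μ, 0 ≤ P a x μ) ∧ (∀ x μ, ∑ a, P a x μ = 1) ∧
        (∀ b y μ, 0 ≤ Q b y μ) ∧ (∀ y μ, ∑ b, Q b y μ = 1) ∧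
        (∀ a b x y,
          Matrix.trace ((M x a ⊗ₖ N y b) * isoState 8 0.24) =
            ((∑ μ, q μ * P a x μ * Q b y μ : ℝ) : ℂ)) := by
  classical
  choose R hRm hR0 hR1 hRint using fun x => response (M x) (hM x)
  let c : (X → A) → (Fin 8 → ℂ) → ℝ := fun f z => ∏ x, R x (f x) z
  have hRle : ∀ x a z, R x a z ≤ 1 := fun x a z => by
    rw [← hR1 x z]
    exact Finset.single_le_sum (f := fun a => R x a z) (fun k _ => hR0 x k z) (Finset.mem_univ a)
  have hcm : ∀ f, Measurable (c f) := fun f => Finset.measurable_fun_prod _ fun x _ => hRm x (f x)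
  have hc0 : ∀ f z, 0 ≤ c f z := fun f z => Finset.prod_nonneg fun x _ => hR0 _ _ _
  have hc1 : ∀ f z, c f z ≤ 1 := fun f z => Finset.prod_le_one (fun x _ => hR0 _ _ _) fun x _ => hRle _ _ _
  have hctot : ∀ z, ∑ f, c f z = 1 := fun z => tot (fun x a => R x a z) (fun x => hR1 x z)
  have hcmarg : ∀ z x a, ∑ f, (if f x = a then 1 else 0) * c f z = R x a z :=
    fun z x a => marg (fun x a => R x a z) (fun x => hR1 x z) x a
  let LC : (X → A) → Matrix (Fin 8) (Fin 8) ℂ → ℂ := fun f K =>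
    (1/16) * ∫ z, (c f z : ℂ) * (star z ⬝ᵥ K *ᵥ z) ∂gam
  have hcint : ∀ f K, Integrable (fun z => (c f z : ℂ) * (star z ⬝ᵥ K *ᵥ z)) gam :=
    fun f K => int_bdd (hcm f) (hc0 f) (hc1 f) (quad_int K)
  let L : (X → A) → Matrix (Fin 8) (Fin 8) ℂ → ℝ := fun f K => (LC f K).re
  have hLC : ∀ f K, Kᴴ = K → K * K = K → 0 ≤ L f K ∧ LC f K = (L f K : ℂ) := by
    intro f K h1 h2
    have : LC f K = (((1/16) * ∫ z, c f z * (∑ k, ‖(K *ᵥ z) k‖^2) ∂gam : ℝ) : ℂ) := by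
      simp only [LC, quad_proj K h1 h2]
      rw [Complex.ofReal_mul, ← integral_complex_ofReal]
      push_cast
      rfl
    have hL : L f K = (1/16) * ∫ z, c f z * (∑ k, ‖(K *ᵥ z) k‖^2) ∂gam := by
      simp only [L]
      rw [this, Complex.ofReal_re]
    constructor
    · rw [hL]
      refine mul_nonneg (by norm_num) (integral_nonneg fun z => mul_nonneg (hc0 f z) ?_)
      positivity
    · rw [this, hL]
  have hLCsum : ∀ f y, ∑ b, LC f (N y b) = LC f 1 := by
    intro f y
    simp only [LC]
    rw [← Finset.mul_sum, ← integral_finsetSum _ (fun b _ => hcint f (N y b)), ← (hN y).2.2.2]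
    congr 2
    ext z
    rw [Matrix.sum_mulVec, dotProduct_sum, Finset.mul_sum]
  have hLsum : ∀ f y, ∑ b, L f (N y b) = L f 1 := by
    intro f y
    simp only [L]
    rw [← hLCsum f y, Complex.re_sum]
  have hLCtot : ∀ K, ∑ f, LC f K = (1/8) * K.trace := by
    intro K
    simp only [LC]
    rw [← Finset.mul_sum, ← integral_finsetSum _ (fun f _ => hcint f K)]
    simp_rw [← Finset.sum_mul, ← Complex.ofReal_sum, hctot]
    simp only [Complex.ofReal_one, one_mul]
    rw [quad_total]; ring
  have hLCmarg : ∀ K x a, ∑ f, (if f x = a then 1 else 0) * LC f K =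
      (1/16) * ((al - be) * ((M x a)ᵀ * K).trace + be * (M x a).trace * K.trace) := by
    intro K x a
    rw [← hRint x a K]
    simp only [LC]
    have : ∀ f : X → A, (if f x = a then (1:ℂ) else 0) * (1/16 * ∫ z, (c f z : ℂ) * (star z ⬝ᵥ K *ᵥ z) ∂gam)
       = 1/16 * ∫ z, (if f x = a then (1:ℂ) else 0) * ((c f z : ℂ) * (star z ⬝ᵥ K *ᵥ z)) ∂gam := by
      intro f
      rw [integral_const_mul]; ring
    simp_rw [this]
    rw [← Finset.mul_sum, ← integral_finsetSum _ (fun f _ => (hcint f K).const_mul _)]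
    congr 2
    ext z
    rw [← hcmarg z x a]
    push_cast
    rw [Finset.sum_mul]
    refine Finset.sum_congr rfl fun f _ => ?_
    rw [mul_assoc]
    split_ifs <;> simp
  let t : ℝ := 2352/2405
  have h11 : ((1 : Matrix (Fin 8) (Fin 8) ℂ))ᴴ = 1 := by simp
  have h12 : (1 : Matrix (Fin 8) (Fin 8) ℂ) * 1 = 1 := by simp
  have htr : ∀ {I : Type} [Fintype I] (T : I → Matrix (Fin 8) (Fin 8) ℂ), IsProjMeasurement T →
      ∑ a, (T a).trace.re / 8 = 1 := by
    intro I _ T hT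
    rw [← Finset.sum_div, ← Complex.re_sum, ← Matrix.trace_sum, hT.2.2.2]
    simp
  let Q : B → Y → (X → A) → ℝ := fun b y f => if L f 1 = 0 then (N y b).trace.re / 8 else L f (N y b) / L f 1
  have hqQ : ∀ b y f, L f 1 * Q b y f = L f (N y b) := by
    intro b y f
    simp only [Q]
    split_ifs with h
    · rw [h, zero_mul]
      have h5 := hLsum f y
      rw [h, Finset.sum_eq_zero_iff_of_nonneg (fun b _ => (hLC f _ ((hN y).1 b) ((hN y).2.1 b)).1)] at h5
      exact (h5 b (Finset.mem_univ b)).symm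
    · rw [mul_div_cancel₀ _ h]
  refine ⟨X → A, inferInstance, fun f => L f 1,
    fun a x f => t * (if f x = a then 1 else 0) + (1 - t) * ((M x a).trace.re / 8), Q,
    fun f => (hLC f 1 h11 h12).1, ?_, ?_, ?_, ?_, ?_, ?_⟩
  · have := congrArg Complex.re (hLCtot 1)
    rw [Complex.re_sum] at this
    simp only [L]
    rw [this]
    simp
  · intro a x f
    have := (trace_proj _ ((hM x).1 a) ((hM x).2.1 a)).1
    have h1 : (0:ℝ) ≤ if f x = a then 1 else 0 := by split_ifs <;> norm_num
    have ht : (0:ℝ) ≤ t := by norm_num [t]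
    have ht2 : (0:ℝ) ≤ 1 - t := by norm_num [t]
    positivity
  · intro x f
    rw [Finset.sum_add_distrib, ← Finset.mul_sum, ← Finset.mul_sum, htr _ (hM x)]
    simp
  · intro b y f
    simp only [Q]
    split_ifs
    · exact div_nonneg (trace_proj _ ((hN y).1 b) ((hN y).2.1 b)).1 (by norm_num)
    · exact div_nonneg (hLC f _ ((hN y).1 b) ((hN y).2.1 b)).1 (hLC f 1 h11 h12).1
  · intro y f
    simp only [Q]
    split_ifs with h
    · exact htr _ (hN y)
    · rw [← Finset.sum_div, hLsum, div_self h]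
  · intro a b x y
    have h1 : ∀ f : X → A, ((L f 1 * (t * (if f x = a then 1 else 0) + (1 - t) * ((M x a).trace.re / 8)) * Q b y f : ℝ) : ℂ)
       = t * ((if f x = a then 1 else 0) * LC f (N y b)) + ((1 - t) * ((M x a).trace / 8)) * LC f (N y b) := by
      intro f
      rw [(hLC f _ ((hN y).1 b) ((hN y).2.1 b)).2, (trace_proj _ ((hM x).1 a) ((hM x).2.1 a)).2, ← hqQ b y f]
      rw [Complex.ofReal_re]
      split_ifs <;> push_cast <;> ring
    rw [Complex.ofReal_sum]
    simp_rw [h1]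
    rw [Finset.sum_add_distrib, ← Finset.mul_sum, ← Finset.mul_sum, hLCtot, hLCmarg, iso_trace]
    simp only [t, al, be]
    push_cast
    ring

end LHV8


/-- Lemma 3: the isotropic state `ρ^iso₈(0.24)` admits a local hidden
variable model under local projective measurements. -/
theorem isoState_8_024_LHV_projective :
    ∀ (X Y A B : Type) [Fintype X] [Fintype Y] [Fintype A] [Fintype B]
      (M : X → A → Matrix (Fin 8) (Fin 8) ℂ) (N : Y → B → Matrix (Fin 8) (Fin 8) ℂ),
      (∀ x, IsProjMeasurement (M x)) → (∀ y, IsProjMeasurement (N y)) →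
      ∃ (nΛ : ℕ) (q : Fin nΛ → ℝ) (P : A → X → Fin nΛ → ℝ) (Q : B → Y → Fin nΛ → ℝ),
        (∀ μ, 0 ≤ q μ) ∧ (∑ μ, q μ = 1) ∧
        (∀ a x μ, 0 ≤ P a x μ) ∧ (∀ x μ, ∑ a, P a x μ = 1) ∧
        (∀ b y μ, 0 ≤ Q b y μ) ∧ (∀ y μ, ∑ b, Q b y μ = 1) ∧
        (∀ a b x y,
          Matrix.trace ((M x a ⊗ₖ N y b) * isoState 8 0.24) =
            ((∑ μ, q μ * P a x μ * Q b y μ : ℝ) : ℂ)) := by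
  intro X Y A B _ _ _ _ M N hM hN
  obtain ⟨Λ, _, q, P, Q, h1, h2, h3, h4, h5, h6, h7⟩ := main_generic X Y A B M N hM hN
  let e := (Fintype.equivFin Λ).symm
  refine ⟨Fintype.card Λ, fun μ => q (e μ), fun a x μ => P a x (e μ), fun b y μ => Q b y (e μ),
    fun μ => h1 _, ?_, fun a x μ => h3 _ _ _, fun x μ => h4 _ _, fun b y μ => h5 _ _ _,
    fun y μ => h6 _ _, ?_⟩
  · rw [← h2]
    exact Equiv.sum_comp e q
  · intro a b x y
    rw [h7]
    congr 1
    exact (Equiv.sum_comp e (fun μ => q μ * P a x μ * Q b y μ)).symm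
end

section
/- For all positive integers dA, dB and every integer r with 1 ≤ r ≤ min(dA,dB), if ρ is a density matrix on ℂ^{dA}⊗ℂ^{dB} whose Schmidt number is strictly greater than r, then there exists a Hermitian matrix W (indexed by (Fin dA × Fin dB) × (Fin dA × Fin dB)) such that Tr[Wρ] < 0 while Tr[Wσ] ≥ 0 for every density matrix σ with Schmidt number at most r. -/
open Matrix
open scoped Kronecker ComplexOrder

lemma aux_compact_hull {E : Type*} [AddCommGroup E] [Module ℝ E] [TopologicalSpace E]
    [IsTopologicalAddGroup E] [ContinuousSMul ℝ E] [FiniteDimensional ℝ E] {s : Set E}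
    (hs : IsCompact s) : IsCompact (convexHull ℝ s) := by
  have key : convexHull ℝ s = ⋃ k ∈ Finset.range (Module.finrank ℝ E + 2),
      (fun p : (Fin k → ℝ) × (Fin k → E) => ∑ i, p.1 i • p.2 i) ''
        (stdSimplex ℝ (Fin k) ×ˢ Set.pi Set.univ (fun _ => s)) := by
    apply Set.Subset.antisymm
    · intro x hx
      obtain ⟨ι, _, z, w, hz, hi, hw, hw1, rfl⟩ := eq_pos_convex_span_of_mem_convexHull hx
      have hc := hi.card_le_finrank_succ
      have hc2 : Module.finrank ℝ (vectorSpan ℝ (Set.range z)) ≤ Module.finrank ℝ E :=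
        Submodule.finrank_le _
      let e := (Fintype.equivFin ι).symm
      simp only [Set.mem_iUnion]
      refine ⟨Fintype.card ι, by rw [Finset.mem_range]; omega, (w ∘ e, z ∘ e), ⟨⟨?_, ?_⟩, ?_⟩, ?_⟩
      · intro i; exact (hw _).le
      · rw [← hw1]; exact e.sum_comp w
      · intro i _; exact hz ⟨_, rfl⟩
      · exact e.sum_comp (fun i => w i • z i)
    · intro x hx
      simp only [Set.mem_iUnion] at hx
      obtain ⟨k, -, ⟨w, z⟩, ⟨⟨h0, h1⟩, h2⟩, rfl⟩ := hx
      exact (convex_convexHull ℝ s).sum_mem (fun i _ => h0 i) h1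
        (fun i _ => subset_convexHull ℝ s (h2 i trivial))
  rw [key]
  refine (Finset.range _).isCompact_biUnion fun k _ => ?_
  refine IsCompact.image ((isCompact_stdSimplex ℝ (Fin k)).prod (isCompact_univ_pi fun _ => hs)) ?_
  fun_prop

lemma aux_isClosed {m n : Type*} [Fintype m] [Fintype n] [DecidableEq n] (r : ℕ) :
    IsClosed {ψ : m × n → ℂ | schmidtRank ψ ≤ r} := by
  let L : (m × n → ℂ) →ₗ[ℂ] ((n → ℂ) →L[ℂ] (m → ℂ)) :=
    { toFun := fun ψ => LinearMap.toContinuousLinearMap (Matrix.of fun i j => ψ (i, j)).mulVecLin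
      map_add' := by
        intro a b; ext v i
        simp [Matrix.mulVec, dotProduct, add_mul, Finset.sum_add_distrib]
      map_smul' := by
        intro a b; ext v i
        simp [Matrix.mulVec, dotProduct, mul_assoc, Finset.mul_sum] }
  have hL : Continuous L := L.continuous_of_finiteDimensional
  have h := (isOpen_setOfPred_nat_le_rank (𝕜 := ℂ) (E := n → ℂ) (F := m → ℂ) (r+1)).preimage hL
  rw [← isOpen_compl_iff]
  convert h using 1
  ext ψ
  simp only [Set.mem_compl_iff, Set.mem_ofPred_eq, not_le, Set.mem_preimage]
  have : (L ψ : (n → ℂ) →ₗ[ℂ] (m → ℂ)).rank = (schmidtRank ψ : Cardinal) := by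
    rw [schmidtRank, Matrix.rank]
    exact (Module.finrank_eq_rank _ _).symm
  change _ ↔ ((r+1 : ℕ) : Cardinal) ≤ (L ψ : (n → ℂ) →ₗ[ℂ] (m → ℂ)).rank
  rw [this, Nat.cast_le]
  rfl

lemma aux_rank_smul_s6 {m n : Type*} [Fintype m] [Fintype n] [DecidableEq m] (c : ℂ) (ψ : m × n → ℂ) :
    schmidtRank (c • ψ) ≤ schmidtRank ψ := by
  unfold schmidtRank
  have : (Matrix.of fun i j => (c • ψ) (i, j)) = (c • (1 : Matrix m m ℂ)) * (Matrix.of fun i j => ψ (i, j)) := by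
    ext i j; simp
  rw [this]
  exact Matrix.rank_mul_le_right _ _

lemma aux_vmv_smul {m : Type*} (c : ℝ) (ψ : m → ℂ) :
    vecMulVec ((c : ℂ) • ψ) (star ((c : ℂ) • ψ)) = (c ^ 2) • vecMulVec ψ (star ψ) := by
  ext i j
  simp [vecMulVec_apply]
  ring

lemma aux_smul_s6 {m n : Type*} [Fintype m] [Fintype n] [DecidableEq m] {r : ℕ}
    {A : Matrix (m × n) (m × n) ℂ} (hA : SchmidtNumberLE A r) {c : ℝ} (hc : 0 ≤ c) :
    SchmidtNumberLE (c • A) r := by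
  obtain ⟨k, ψ, h, rfl⟩ := hA
  refine ⟨k, fun i => ((√c : ℝ) : ℂ) • ψ i, fun i => (aux_rank_smul_s6 _ _).trans (h i), ?_⟩
  simp only [aux_vmv_smul, Real.sq_sqrt hc, Finset.smul_sum]

lemma aux_add_s6 {m n : Type*} [Fintype m] [Fintype n] {r : ℕ}
    {A B : Matrix (m × n) (m × n) ℂ} (hA : SchmidtNumberLE A r) (hB : SchmidtNumberLE B r) :
    SchmidtNumberLE (A + B) r := by
  obtain ⟨k, ψ, h, rfl⟩ := hA
  obtain ⟨l, φ, h', rfl⟩ := hB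
  refine ⟨k + l, Fin.append ψ φ, fun i => ?_, ?_⟩
  · refine Fin.addCases (fun i => ?_) (fun i => ?_) i
    · simpa using h i
    · simpa using h' i
  · simp [Fin.sum_univ_add]

lemma aux_trace_herm {m : Type*} [Fintype m] (W A : Matrix m m ℂ) (hA : Aᴴ = A) :
    trace (Wᴴ * A) = star (trace (W * A)) := by
  rw [← trace_conjTranspose, conjTranspose_mul, hA, trace_mul_comm]

theorem schmidt_number_witness_exists (dA dB r : ℕ)
    (hdA : 0 < dA) (hdB : 0 < dB) (hr1 : 1 ≤ r) (hr2 : r ≤ min dA dB)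
    (ρ : Matrix (Fin dA × Fin dB) (Fin dA × Fin dB) ℂ)
    (hρ : IsDensityMatrix ρ) (hSN : ¬ SchmidtNumberLE ρ r) :
    ∃ W : Matrix (Fin dA × Fin dB) (Fin dA × Fin dB) ℂ,
      Wᴴ = W ∧
      Matrix.trace (W * ρ) < 0 ∧
      ∀ σ : Matrix (Fin dA × Fin dB) (Fin dA × Fin dB) ℂ,
        IsDensityMatrix σ → SchmidtNumberLE σ r → 0 ≤ Matrix.trace (W * σ) := by
  let I := Fin dA × Fin dB
  haveI : LocallyConvexSpace ℝ (Matrix I I ℂ) :=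
    inferInstanceAs (LocallyConvexSpace ℝ (I → I → ℂ))
  let T : Set (I → ℂ) := {ψ | ∑ i, ‖ψ i‖ ^ 2 = 1} ∩ {ψ | schmidtRank ψ ≤ r}
  have hT : IsCompact T := by
    refine IsCompact.inter_right ?_ (aux_isClosed r)
    refine Metric.isCompact_of_isClosed_isBounded
      (isClosed_eq (by fun_prop) continuous_const) ?_
    refine (Metric.isBounded_closedBall (x := (0 : I → ℂ)) (r := 1)).subset ?_
    intro ψ hψ
    rw [mem_closedBall_zero_iff, pi_norm_le_iff_of_nonneg zero_le_one]
    intro i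
    have h1 : ‖ψ i‖ ^ 2 ≤ ∑ i, ‖ψ i‖ ^ 2 :=
      Finset.single_le_sum (f := fun i => ‖ψ i‖ ^ 2) (fun _ _ => by positivity) (Finset.mem_univ i)
    rw [show ∑ i, ‖ψ i‖ ^ 2 = 1 from hψ] at h1
    exact (sq_le_one_iff₀ (norm_nonneg _)).1 h1
  let S : Set (Matrix I I ℂ) := (fun ψ => vecMulVec ψ (star ψ)) '' T
  have hS : IsCompact S := hT.image (by fun_prop)
  have hK := aux_compact_hull hS
  have hρK : ρ ∉ convexHull ℝ S := by
    intro h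
    apply hSN
    refine convexHull_min (t := {A | SchmidtNumberLE A r}) ?_ ?_ h
    · rintro _ ⟨ψ, hψ, rfl⟩
      exact ⟨1, fun _ => ψ, fun _ => hψ.2, by simp⟩
    · intro A hA B hB a b ha hb _
      exact aux_add_s6 (aux_smul_s6 hA ha) (aux_smul_s6 hB hb)
  obtain ⟨f, u, hf1, hf2⟩ := RCLike.geometric_hahn_banach_point_closed (𝕜 := ℂ)
    (convex_convexHull ℝ S) hK.isClosed hρK
  let W0 : Matrix I I ℂ := Matrix.of fun i j => f (Matrix.single j i 1)
  have hW0 : ∀ A : Matrix I I ℂ, trace (W0 * A) = f A := by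
    intro A
    conv_rhs => rw [matrix_eq_sum_single A]
    simp only [map_sum, trace, diag, mul_apply]
    rw [Finset.sum_comm]
    refine Finset.sum_congr rfl fun i _ => Finset.sum_congr rfl fun j _ => ?_
    have : Matrix.single i j (A i j) = A i j • Matrix.single i j (1:ℂ) := by simp
    rw [this, map_smul, smul_eq_mul, mul_comm]
    rfl
  let W : Matrix I I ℂ := ((1/2 : ℝ) : ℂ) • (W0 + W0ᴴ) - (u : ℂ) • 1
  have hW : ∀ A : Matrix I I ℂ, Aᴴ = A →
      trace (W * A) = (((f A).re : ℝ) : ℂ) - u * trace A := by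
    intro A hA
    simp only [W, sub_mul, smul_mul_assoc, add_mul, trace_sub, trace_smul, trace_add, one_mul,
      aux_trace_herm _ _ hA, hW0, smul_eq_mul]
    congr 1
    rw [Complex.re_eq_add_conj, starRingEnd_apply]
    push_cast; ring
  have htr : ∀ ψ : I → ℂ, trace (vecMulVec ψ (star ψ)) = ((∑ i, ‖ψ i‖ ^ 2 : ℝ) : ℂ) := by
    intro ψ
    simp [trace, vecMulVec_apply, Complex.mul_conj']
  have hvh : ∀ ψ : I → ℂ, (vecMulVec ψ (star ψ))ᴴ = vecMulVec ψ (star ψ) := by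
    intro ψ; simp
  refine ⟨W, ?_, ?_, ?_⟩
  · simp [W, add_comm]
  · rw [hW ρ hρ.1.1, hρ.2, mul_one, ← Complex.ofReal_sub]
    rw [← Complex.ofReal_zero, Complex.real_lt_real]
    simpa using sub_neg.2 hf1
  · rintro σ - ⟨k, ψ, hψ, rfl⟩
    rw [Finset.mul_sum, trace_sum]
    refine Finset.sum_nonneg fun i _ => ?_
    rw [hW _ (hvh _), htr, ← Complex.ofReal_mul, ← Complex.ofReal_sub, ← Complex.ofReal_zero,
      Complex.real_le_real, sub_nonneg]
    set N : ℝ := ∑ j, ‖ψ i j‖ ^ 2 with hN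
    have hN0 : 0 ≤ N := Finset.sum_nonneg fun _ _ => by positivity
    rcases hN0.eq_or_lt with h0 | hpos
    · have : ψ i = 0 := by
        ext j
        have := (Finset.sum_eq_zero_iff_of_nonneg (fun _ _ => by positivity)).1 h0.symm j
          (Finset.mem_univ j)
        simpa using this
      simp [← h0, this]
    · have hmem : ((((√N)⁻¹ : ℝ) : ℂ) • ψ i) ∈ T := by
        refine ⟨?_, (aux_rank_smul_s6 _ _).trans (hψ i)⟩
        change ∑ j, ‖((((√N)⁻¹ : ℝ) : ℂ) • ψ i) j‖ ^ 2 = 1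
        simp only [Pi.smul_apply, norm_smul, mul_pow, ← Finset.mul_sum, ← hN]
        rw [Complex.norm_real, Real.norm_eq_abs, sq_abs, inv_pow, Real.sq_sqrt hN0]
        exact inv_mul_cancel₀ hpos.ne'
      have h2 := hf2 _ (subset_convexHull ℝ S ⟨_, hmem, rfl⟩)
      simp only [aux_vmv_smul, inv_pow, Real.sq_sqrt hN0] at h2
      rw [← Complex.coe_smul, map_smul] at h2
      simp only [smul_eq_mul, RCLike.re_eq_complex_re, Complex.re_ofReal_mul] at h2
      rw [inv_mul_eq_div, lt_div_iff₀ hpos] at h2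
      exact h2.le
end

section
/- Schmidt number is monotone under local filtering: for all positive integers dA, dB, dA', dB', every positive semidefinite matrix ρ indexed by (Fin dA × Fin dB) with Schmidt number at most r, and all complex matrices A of size dA' × dA and B of size dB' × dB, the positive semidefinite matrix (A ⊗ B) ρ (A ⊗ B)† (indexed by (Fin dA' × Fin dB')) has Schmidt number at most r. -/
open Matrix
open scoped Kronecker ComplexOrder

/-- Schmidt number is monotone under local filtering:
if `SN(ρ) ≤ r` then `SN((A ⊗ B) ρ (A ⊗ B)†) ≤ r`. -/
theorem schmidt_number_le_local_filtering (dA dB dA' dB' r : ℕ)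
    (hdA : 0 < dA) (hdB : 0 < dB) (hdA' : 0 < dA') (hdB' : 0 < dB')
    (ρ : Matrix (Fin dA × Fin dB) (Fin dA × Fin dB) ℂ)
    (hρ : ρ.PosSemidef) (hSN : SchmidtNumberLE ρ r)
    (A : Matrix (Fin dA') (Fin dA) ℂ) (B : Matrix (Fin dB') (Fin dB) ℂ) :
    ((A ⊗ₖ B) * ρ * (A ⊗ₖ B)ᴴ).PosSemidef ∧
    SchmidtNumberLE ((A ⊗ₖ B) * ρ * (A ⊗ₖ B)ᴴ) r := by
  refine ⟨hρ.mul_mul_conjTranspose_same _, ?_⟩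
  obtain ⟨k, ψ, hr, rfl⟩ := hSN
  refine ⟨k, fun i => (A ⊗ₖ B) *ᵥ ψ i, fun i => ?_, ?_⟩
  · have h : (Matrix.of fun a b => ((A ⊗ₖ B) *ᵥ ψ i) (a, b))
        = A * (Matrix.of fun a b => ψ i (a, b)) * Bᵀ := by
      ext a b
      simp only [Matrix.of_apply, Matrix.mulVec, dotProduct, Matrix.mul_apply,
        Matrix.kroneckerMap_apply, Matrix.transpose_apply, Fintype.sum_prod_type,
        Finset.sum_mul]
      rw [Finset.sum_comm]
      refine Finset.sum_congr rfl fun x _ => Finset.sum_congr rfl fun y _ => ?_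
      ring
    unfold schmidtRank
    rw [h]
    exact ((Matrix.rank_mul_le_left _ _).trans (Matrix.rank_mul_le_right _ _)).trans (hr i)
  · rw [Matrix.mul_sum, Matrix.sum_mul]
    refine Finset.sum_congr rfl fun i _ => ?_
    rw [Matrix.mul_vecMulVec, Matrix.vecMulVec_mul, Matrix.star_mulVec]
end

section
/- Schmidt number does not increase under transposition: for all positive integers dA, dB and every positive semidefinite matrix ρ indexed by (Fin dA × Fin dB) with Schmidt number at most r, the transpose ρᵀ also has Schmidt number at most r. -/
open Matrix
open scoped Kronecker ComplexOrder

/-- Schmidt number does not increase under transposition. -/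
theorem schmidt_number_le_transpose (dA dB r : ℕ)
    (hdA : 0 < dA) (hdB : 0 < dB)
    (ρ : Matrix (Fin dA × Fin dB) (Fin dA × Fin dB) ℂ)
    (hρ : ρ.PosSemidef) (hSN : SchmidtNumberLE ρ r) :
    SchmidtNumberLE ρᵀ r := by
  obtain ⟨k, ψ, hψ, h⟩ := hSN
  refine ⟨k, fun i => star (ψ i), fun i => ?_, ?_⟩
  · have e : (Matrix.of fun a b => (star (ψ i)) (a, b)) =
        ((Matrix.of fun a b => ψ i (a, b))ᴴ)ᵀ := by
      ext a b
      simp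
    have h1 := hψ i
    unfold schmidtRank at h1 ⊢
    rw [e, Matrix.rank_transpose, Matrix.rank_conjTranspose]
    exact h1
  · rw [h, Matrix.transpose_sum]
    refine Finset.sum_congr rfl fun i _ => ?_
    rw [Matrix.transpose_vecMulVec, star_star]
end

section
/- Let ρ be a positive semidefinite matrix indexed by (Fin dA × Fin dB) with Schmidt number at most r, let M be an effect indexed by (Fin dA₀ × Fin dA) (an operator on the A₀A system) and N an effect indexed by (Fin dB × Fin dB₀) (an operator on the B B₀ system). Define the matrix R indexed by (Fin dA₀ × Fin dB₀) by R_{(i₀,j₀),(i₀',j₀')} = Σ_{i,i',j,j'} M_{(i₀,i),(i₀',i')} N_{(j,j₀),(j',j₀')} ρ_{(i,j),(i',j')} (i.e., R = Tr_{AB}[(M ⊗ N)(ρ ⊗ I_{A₀B₀})] after appropriate reordering of tensor factors). Then R is positive semidefinite and has Schmidt number at most r. -/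
open Matrix
open scoped Kronecker ComplexOrder

theorem aux_psd_of_SN {m n : Type*} [Fintype m] [Fintype n]
    (ρ : Matrix (m × n) (m × n) ℂ) (r : ℕ) (h : SchmidtNumberLE ρ r) : ρ.PosSemidef := by
  obtain ⟨k, ψ, -, rfl⟩ := h
  exact Matrix.posSemidef_sum _ fun i _ => Matrix.posSemidef_vecMulVec_self_star _

theorem aux_SN_of_fintype {m n ι : Type*} [Fintype m] [Fintype n] [Fintype ι]
    (ρ : Matrix (m × n) (m × n) ℂ) (r : ℕ) (ψ : ι → m × n → ℂ)
    (h : ∀ i, schmidtRank (ψ i) ≤ r)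
    (e : ρ = ∑ i, Matrix.vecMulVec (ψ i) (star (ψ i))) : SchmidtNumberLE ρ r := by
  refine ⟨Fintype.card ι, fun i => ψ ((Fintype.equivFin ι).symm i), fun i => h _, ?_⟩
  rw [e]
  exact ((Fintype.equivFin ι).symm.sum_comp
    (fun i => Matrix.vecMulVec (ψ i) (star (ψ i)))).symm

open scoped MatrixOrder Matrix.Norms.L2Operator in
theorem aux_psd_decomp {n : Type*} [Fintype n] [DecidableEq n] (M : Matrix n n ℂ)
    (h : M.PosSemidef) : ∃ u : n → n → ℂ, ∀ a b, M a b = ∑ s, u s a * star (u s b) := by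
  obtain ⟨B, rfl⟩ := CStarAlgebra.nonneg_iff_eq_star_mul_self.mp h.nonneg
  exact ⟨fun s a => star (B s a), fun a b => by
    simp [Matrix.mul_apply, Matrix.star_eq_conjTranspose]⟩

/-- post-measurement (filtered) operator
`R = Tr_{AB}[(M ⊗ N)(ρ ⊗ I_{A₀B₀})]` is positive semidefinite with Schmidt number at
most `r`, whenever `SN(ρ) ≤ r` and `M, N` are effects. -/
theorem filtered_operator_schmidt_number_le (dA dB dA₀ dB₀ r : ℕ)
    (ρ : Matrix (Fin dA × Fin dB) (Fin dA × Fin dB) ℂ)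
    (hρ : ρ.PosSemidef) (hSN : SchmidtNumberLE ρ r)
    (M : Matrix (Fin dA₀ × Fin dA) (Fin dA₀ × Fin dA) ℂ)
    (N : Matrix (Fin dB × Fin dB₀) (Fin dB × Fin dB₀) ℂ)
    (hM : IsEffect M) (hN : IsEffect N) :
    (Matrix.of fun (p q : Fin dA₀ × Fin dB₀) =>
        ∑ i, ∑ i', ∑ j, ∑ j',
          M (p.1, i) (q.1, i') * N (j, p.2) (j', q.2) * ρ (i, j) (i', j')).PosSemidef ∧
    SchmidtNumberLE
      (Matrix.of fun (p q : Fin dA₀ × Fin dB₀) =>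
        ∑ i, ∑ i', ∑ j, ∑ j',
          M (p.1, i) (q.1, i') * N (j, p.2) (j', q.2) * ρ (i, j) (i', j')) r := by
  have key : SchmidtNumberLE
      (Matrix.of fun (p q : Fin dA₀ × Fin dB₀) =>
        ∑ i, ∑ i', ∑ j, ∑ j',
          M (p.1, i) (q.1, i') * N (j, p.2) (j', q.2) * ρ (i, j) (i', j')) r := by
    obtain ⟨u, hu⟩ := aux_psd_decomp M hM.1
    obtain ⟨v, hv⟩ := aux_psd_decomp N hN.1
    obtain ⟨k, ψ, hψ, e⟩ := hSN
    refine aux_SN_of_fintype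
      (ι := (Fin dA₀ × Fin dA) × (Fin dB × Fin dB₀) × Fin k) _ r
      (fun x p => ∑ i, ∑ j, u x.1 (p.1, i) * ψ x.2.2 (i, j) * v x.2.1 (j, p.2)) ?_ ?_
    · rintro ⟨s, t, l⟩
      refine le_trans ?_ (hψ l)
      unfold schmidtRank
      have : (Matrix.of fun i j => (fun p : Fin dA₀ × Fin dB₀ => ∑ i, ∑ j,
            u s (p.1, i) * ψ l (i, j) * v t (j, p.2)) (i, j))
          = (Matrix.of fun a i => u s (a, i)) * ((Matrix.of fun i j => ψ l (i, j))
            * (Matrix.of fun j b => v t (j, b))) := by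
        ext a b
        simp [Matrix.mul_apply, Finset.mul_sum, mul_assoc]
      simp only [this]
      exact (Matrix.rank_mul_le_right _ _).trans (Matrix.rank_mul_le_left _ _)
    · ext p q
      have e' : ∀ a b, ρ a b = ∑ l, ψ l a * star (ψ l b) := by
        intro a b
        rw [e]
        simp [Matrix.sum_apply, Matrix.vecMulVec_apply]
      simp only [Matrix.of_apply, Matrix.sum_apply, Matrix.vecMulVec_apply, Pi.star_apply,
        hu, hv, e']
      have h1 : ∀ x : (Fin dA₀ × Fin dA) × (Fin dB × Fin dB₀) × Fin k,
          (∑ i, ∑ j, u x.1 (p.1, i) * ψ x.2.2 (i, j) * v x.2.1 (j, p.2)) *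
            star (∑ i, ∑ j, u x.1 (q.1, i) * ψ x.2.2 (i, j) * v x.2.1 (j, q.2)) =
          ∑ i, ∑ i', ∑ j, ∑ j', (u x.1 (p.1, i) * star (u x.1 (q.1, i'))) *
            ((v x.2.1 (j, p.2) * star (v x.2.1 (j', q.2))) *
            (ψ x.2.2 (i, j) * star (ψ x.2.2 (i', j')))) := by
        intro x
        rw [star_sum, Finset.sum_mul_sum]
        refine Finset.sum_congr rfl fun i _ => Finset.sum_congr rfl fun i' _ => ?_
        rw [star_sum, Finset.sum_mul_sum]
        refine Finset.sum_congr rfl fun j _ => Finset.sum_congr rfl fun j' _ => ?_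
        simp only [star_mul']
        ring
      refine Eq.trans ?_ (Finset.sum_congr rfl fun x _ => h1 x).symm
      refine Eq.trans ?_ Finset.sum_comm
      refine Finset.sum_congr rfl fun i _ => ?_
      refine Eq.trans ?_ Finset.sum_comm
      refine Finset.sum_congr rfl fun i' _ => ?_
      refine Eq.trans ?_ Finset.sum_comm
      refine Finset.sum_congr rfl fun j _ => ?_
      refine Eq.trans ?_ Finset.sum_comm
      refine Finset.sum_congr rfl fun j' _ => ?_
      refine Eq.trans ?_ (Fintype.sum_prod_type _).symm
      rw [mul_assoc, Finset.sum_mul]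
      refine Finset.sum_congr rfl fun s _ => ?_
      dsimp only
      rw [← Finset.mul_sum]
      congr 1
      refine Eq.trans ?_ (Fintype.sum_prod_type _).symm
      rw [Finset.sum_mul_sum]
  exact ⟨aux_psd_of_SN _ _ key, key⟩
end

section
/- For all positive integers dA, dB and all complex matrices ξ (of size dA × dA), ζ (of size dB × dB), and ρ (indexed by (Fin dA × Fin dB) × (Fin dA × Fin dB)): Tr[(P_{dA} ⊗ P_{dB}) · e(ξᵀ ⊗ ρ ⊗ ζᵀ)] = Tr[(ξ ⊗ ζ) ρ] / (dA · dB), where P_d = |Φ⁺_d⟩⟨Φ⁺_d| is the projector onto the maximally entangled state and e is the reindexing of a matrix indexed by Fin dA × ((Fin dA × Fin dB) × Fin dB) to one indexed by (Fin dA × Fin dA) × (Fin dB × Fin dB) via (i₀,((i,j),j₀)) ↦ ((i₀,i),(j,j₀)) applied to rows and columns. -/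
open Matrix
open scoped Kronecker ComplexOrder

/-- Reindexing `(i₀, ((i,j), j₀)) ↦ ((i₀, i), (j, j₀))`. -/
def eIdx (dA dB : ℕ) :
    (Fin dA × ((Fin dA × Fin dB) × Fin dB)) ≃ (Fin dA × Fin dA) × (Fin dB × Fin dB) where
  toFun x := ((x.1, x.2.1.1), (x.2.1.2, x.2.2))
  invFun x := (x.1.1, ((x.1.2, x.2.1), x.2.2))
  left_inv x := rfl
  right_inv x := rfl

theorem projME_apply_aux (d : ℕ) (a b a' b' : Fin d) :
    projME d (a, b) (a', b') = if a = b then (if a' = b' then ((d : ℂ))⁻¹ else 0) else 0 := by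
  have h : ((Real.sqrt d : ℝ) : ℂ) * ((Real.sqrt d : ℝ) : ℂ) = (d : ℂ) := by
    rw [← Complex.ofReal_mul, Real.mul_self_sqrt (Nat.cast_nonneg d)]
    simp
  simp only [projME, Matrix.vecMulVec_apply, maxEnt, Pi.star_apply]
  split_ifs <;> simp [← mul_inv, h]

/-- the key trace identity:
`Tr[(P_{dA} ⊗ P_{dB}) · e(ξᵀ ⊗ ρ ⊗ ζᵀ)] = Tr[(ξ ⊗ ζ) ρ] / (dA dB)`. -/
theorem trace_identity_maximally_entangled (dA dB : ℕ) (hdA : 0 < dA) (hdB : 0 < dB)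
    (ξ : Matrix (Fin dA) (Fin dA) ℂ) (ζ : Matrix (Fin dB) (Fin dB) ℂ)
    (ρ : Matrix (Fin dA × Fin dB) (Fin dA × Fin dB) ℂ) :
    Matrix.trace ((projME dA ⊗ₖ projME dB) *
        Matrix.reindex (eIdx dA dB) (eIdx dA dB) (ξᵀ ⊗ₖ (ρ ⊗ₖ ζᵀ))) =
      Matrix.trace ((ξ ⊗ₖ ζ) * ρ) / ((dA : ℂ) * (dB : ℂ)) := by
  simp only [Matrix.trace, Matrix.diag, Matrix.mul_apply, Fintype.sum_prod_type,
    Matrix.kroneckerMap_apply, projME_apply_aux, Matrix.reindex_apply, Matrix.submatrix_apply,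
    eIdx, Equiv.coe_fn_symm_mk, Matrix.transpose_apply, ite_mul, mul_ite, zero_mul, mul_zero,
    Finset.sum_ite_eq, Finset.sum_ite_irrel, Finset.sum_const_zero, Finset.mem_univ, if_true,
    Finset.sum_div]
  refine Finset.sum_congr rfl fun a _ => Finset.sum_congr rfl fun b _ =>
    Finset.sum_congr rfl fun a' _ => Finset.sum_congr rfl fun b' _ => ?_
  rw [div_eq_mul_inv, mul_inv]
  ring
end

section
/- For every λ ∈ (5/8, 1], the two-qutrit isotropic state ρ^iso₃(λ) = λ P₃ + (1−λ) I/9 on ℂ³⊗ℂ³ has Schmidt number greater than 2; in particular Tr[(I − (3/2) P₃) ρ^iso₃(λ)] < 0 exactly when λ > 5/8. -/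
open Matrix
open scoped Kronecker ComplexOrder

lemma aux_schmidt_cs (C : Matrix (Fin 3) (Fin 3) ℂ) (hC : C.rank ≤ 2) :
    ‖C.trace‖ ^ 2 ≤ 2 * ∑ p : Fin 3 × Fin 3, ‖C p.1 p.2‖ ^ 2 := by
  have hdet : C.det = 0 := by
    by_contra h
    have := Matrix.rank_of_isUnit C ((Matrix.isUnit_iff_isUnit_det C).2 (isUnit_iff_ne_zero.2 h))
    simp at this
    omega
  obtain ⟨v, hv, hCv⟩ := Matrix.exists_mulVec_eq_zero_iff.2 hdet
  set N : ℝ := ∑ i, ‖v i‖ ^ 2 with hN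
  have hNpos : 0 < N := by
    obtain ⟨i, hi⟩ := Function.ne_iff.1 hv
    refine Finset.sum_pos' (fun i _ => by positivity) ⟨i, Finset.mem_univ _, ?_⟩
    have : 0 < ‖v i‖ := norm_pos_iff.2 hi
    positivity
  let M : Fin 3 × Fin 3 → ℂ := fun p => (if p.1 = p.2 then (N : ℂ) else 0) - star (v p.1) * v p.2
  have h1 : (N : ℂ) * C.trace = ∑ p : Fin 3 × Fin 3, C p.1 p.2 * M p := by
    have h0 := congrFun hCv 0
    have h1 := congrFun hCv 1
    have h2 := congrFun hCv 2
    simp only [Matrix.mulVec, dotProduct, Fin.sum_univ_three, Pi.zero_apply] at h0 h1 h2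
    simp [Fintype.sum_prod_type, Fin.sum_univ_three, Matrix.trace, M]
    linear_combination (starRingEnd ℂ (v 0)) * h0 + (starRingEnd ℂ (v 1)) * h1 + (starRingEnd ℂ (v 2)) * h2
  have h2 : ∑ p : Fin 3 × Fin 3, ‖M p‖ ^ 2 = 2 * N ^ 2 := by
    simp only [← Complex.normSq_eq_norm_sq] at hN ⊢
    simp only [Fin.sum_univ_three, Complex.normSq_apply] at hN
    simp [Fintype.sum_prod_type, Fin.sum_univ_three, M, Complex.normSq_apply]
    rw [hN]
    ring
  have h3 : (N * ‖C.trace‖) ^ 2 ≤ (∑ p : Fin 3 × Fin 3, ‖C p.1 p.2‖ ^ 2) * (2 * N ^ 2) := by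
    rw [← h2]
    refine le_trans ?_ (Finset.sum_mul_sq_le_sq_mul_sq _ _ _)
    have : N * ‖C.trace‖ = ‖(N : ℂ) * C.trace‖ := by
      rw [norm_mul, Complex.norm_real, Real.norm_of_nonneg hNpos.le]
    rw [this, h1]
    gcongr
    refine (norm_sum_le _ _).trans (le_of_eq ?_)
    simp
  have : 0 < N ^ 2 := by positivity
  refine le_of_mul_le_mul_left ?_ this
  nlinarith

lemma aux_sqrt3 : ((√3 : ℝ) : ℂ)⁻¹ * ((√3 : ℝ) : ℂ)⁻¹ = 1 / 3 := by
  rw [← mul_inv, ← Complex.ofReal_mul, Real.mul_self_sqrt (by norm_num)]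
  norm_num

lemma aux_projME (p q : Fin 3 × Fin 3) :
    projME 3 p q = if p.1 = p.2 ∧ q.1 = q.2 then 1 / 3 else 0 := by
  by_cases h1 : p.1 = p.2 <;> by_cases h2 : q.1 = q.2 <;>
    simp [projME, maxEnt, Matrix.vecMulVec_apply, h1, h2]
  simpa using aux_sqrt3

lemma aux_trace_proj (ρ : Matrix (Fin 3 × Fin 3) (Fin 3 × Fin 3) ℂ) :
    Matrix.trace ((1 - ((3 : ℂ) / 2) • projME 3) * ρ) =
      ρ.trace - 1 / 2 * ∑ i, ∑ j, ρ (i, i) (j, j) := by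
  rw [sub_mul, one_mul, Matrix.trace_sub]
  congr 1
  simp [Matrix.trace, Matrix.mul_apply, aux_projME, Fintype.sum_prod_type, Fin.sum_univ_three]
  ring

lemma aux_pure (ψ : Fin 3 × Fin 3 → ℂ) (h : schmidtRank ψ ≤ 2) :
    0 ≤ Matrix.trace ((1 - ((3 : ℂ) / 2) • projME 3) * Matrix.vecMulVec ψ (star ψ)) := by
  have key := aux_schmidt_cs _ h
  have e : Matrix.trace ((1 - ((3 : ℂ) / 2) • projME 3) * Matrix.vecMulVec ψ (star ψ)) =
      ((∑ p : Fin 3 × Fin 3, ‖ψ p‖ ^ 2 - 1 / 2 *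
        ‖(Matrix.of fun i j => ψ (i, j)).trace‖ ^ 2 : ℝ) : ℂ) := by
    rw [aux_trace_proj]
    push_cast
    simp only [← Complex.mul_conj']
    simp [Matrix.trace, Matrix.vecMulVec_apply, Fintype.sum_prod_type, Fin.sum_univ_three]
    ring
  rw [e, Complex.zero_le_real]
  simp only [Matrix.of_apply] at key
  linarith

lemma aux_iso (l : ℝ) :
    Matrix.trace ((1 - ((3 : ℂ) / 2) • projME 3) * isoState 3 l) =
      (((5 - 8 * l) / 6 : ℝ) : ℂ) := by
  rw [aux_trace_proj]
  simp [isoState, Matrix.trace, aux_projME, Fintype.sum_prod_type, Fin.sum_univ_three,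
    Matrix.one_apply]
  ring

/-- the two-qutrit isotropic state `ρ^iso₃(λ)` has Schmidt number greater
than 2 for `λ ∈ (5/8, 1]`; in particular the optimal witness value
`Tr[(I − (3/2)P₃) ρ^iso₃(λ)]` is negative exactly when `λ > 5/8`. -/
theorem isotropic_qutrit_schmidt_number_gt_two :
    (∀ l : ℝ, 5 / 8 < l → l ≤ 1 → ¬ SchmidtNumberLE (isoState 3 l) 2) ∧
    (∀ l : ℝ, 0 ≤ l → l ≤ 1 →
      (Matrix.trace ((1 - ((3 : ℂ) / 2) • projME 3) * isoState 3 l) < 0 ↔ 5 / 8 < l)) := by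
  constructor
  · rintro l hl - ⟨k, ψ, hψ, h⟩
    have h1 := aux_iso l
    have h2 : 0 ≤ Matrix.trace ((1 - ((3 : ℂ) / 2) • projME 3) * isoState 3 l) := by
      rw [h, Matrix.mul_sum, Matrix.trace_sum]
      exact Finset.sum_nonneg fun i _ => aux_pure _ (hψ i)
    rw [h1, Complex.zero_le_real] at h2
    linarith
  · intro l _ _
    rw [aux_iso, ← Complex.ofReal_zero, Complex.real_lt_real]
    constructor <;> intro h <;> linarith
end

section
/- Every two-outcome POVM is a convex combination of projective measurements: for every positive integer d and every complex d×d matrix E with 0 ≤ E ≤ I (both E and I − E positive semidefinite), there exist a finite family of orthogonal projections P_k (P_k† = P_k = P_k²) and weights p_k ≥ 0 with Σ_k p_k = 1 such that E = Σ_k p_k P_k (and hence I − E = Σ_k p_k (I − P_k)). -/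
open Matrix
open scoped Kronecker ComplexOrder

/-- every two-outcome POVM is a convex combination of projective
measurements: every effect `E` (with `0 ≤ E ≤ I`) is a convex combination of orthogonal
projections. -/
theorem dichotomic_povm_convex_combination_of_projectives (d : ℕ) (hd : 0 < d)
    (E : Matrix (Fin d) (Fin d) ℂ) (hE : E.PosSemidef ∧ (1 - E).PosSemidef) :
    ∃ (k : ℕ) (P : Fin k → Matrix (Fin d) (Fin d) ℂ) (p : Fin k → ℝ),
      (∀ i, (P i)ᴴ = P i ∧ P i * P i = P i) ∧
      (∀ i, 0 ≤ p i) ∧ (∑ i, p i = 1) ∧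
      E = ∑ i, (p i : ℂ) • P i := by
  obtain ⟨h0, h1⟩ := hE
  have hH := h0.isHermitian
  have hsp := hH.spectral_theorem
  rw [Unitary.conjStarAlgAut_apply] at hsp
  have hU1 : (star (hH.eigenvectorUnitary : Matrix (Fin d) (Fin d) ℂ)) *
      (hH.eigenvectorUnitary : Matrix (Fin d) (Fin d) ℂ) = 1 :=
    Unitary.coe_star_mul_self _
  have hlam0 := h0.eigenvalues_nonneg
  have hlam1 : ∀ i, hH.eigenvalues i ≤ 1 := by
    have h2 := h1.conjTranspose_mul_mul_same
      (hH.eigenvectorUnitary : Matrix (Fin d) (Fin d) ℂ)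
    generalize (hH.eigenvectorUnitary : Matrix (Fin d) (Fin d) ℂ) = U at *
    generalize hH.eigenvalues = l at *
    have h3 : Uᴴ * (1 - E) * U = diagonal (fun i => ((1 - l i : ℝ) : ℂ)) := by
      have h4 : Uᴴ * E * U = diagonal (RCLike.ofReal ∘ l) := by
        rw [hsp]
        simp only [star_eq_conjTranspose] at *
        calc _ = (Uᴴ * U) * diagonal (RCLike.ofReal ∘ l) * (Uᴴ * U) := by
              simp only [Matrix.mul_assoc]
          _ = _ := by rw [hU1]; simp
      rw [Matrix.mul_sub, Matrix.sub_mul, h4, Matrix.mul_one, ← star_eq_conjTranspose, hU1,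
        ← diagonal_one, diagonal_sub]
      congr 1
      ext i
      simp
    rw [h3, posSemidef_diagonal_iff] at h2
    intro i
    have := h2 i
    have h5 : (0 : ℝ) ≤ 1 - l i := by exact_mod_cast this
    linarith
  generalize (hH.eigenvectorUnitary : Matrix (Fin d) (Fin d) ℂ) = U at *
  generalize hH.eigenvalues = l at *
  have hmem : l ∈ convexHull ℝ (Set.univ.pi fun _ : Fin d => ({0, 1} : Set ℝ)) := by
    rw [convexHull_pi]
    intro i _
    rw [convexHull_pair, segment_eq_Icc zero_le_one]
    exact ⟨hlam0 i, hlam1 i⟩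
  rw [mem_convexHull_iff_exists_fintype] at hmem
  obtain ⟨ι, _, w, z, hw, hw1, hz, hsum⟩ := hmem
  let e := (Fintype.equivFin ι).symm
  refine ⟨Fintype.card ι, fun i => U * diagonal (fun j => (z (e i) j : ℂ)) * star U,
    fun i => w (e i), ?_, fun i => hw _, ?_, ?_⟩
  · intro i
    constructor
    · simp only [star_eq_conjTranspose, conjTranspose_mul, conjTranspose_conjTranspose,
        diagonal_conjTranspose, Matrix.mul_assoc]
      congr 3
      ext j
      simp
    · set D := diagonal (fun j => (z (e i) j : ℂ)) with hD
      have hDD : D * D = D := by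
        rw [hD, diagonal_mul_diagonal]
        congr 1
        ext j
        rcases hz (e i) j (Set.mem_univ _) with h | h
        · simp [h]
        · rw [Set.mem_singleton_iff] at h
          simp [h]
      calc _ = U * D * (star U * U) * D * star U := by simp only [hD, Matrix.mul_assoc]
        _ = U * (D * D) * star U := by rw [hU1]; simp only [Matrix.mul_assoc, Matrix.one_mul]
        _ = _ := by rw [hDD]
  · rw [← hw1]
    exact e.sum_comp w
  · rw [e.sum_comp (fun i => (w i : ℂ) • (U * diagonal (fun j => (z i j : ℂ)) * star U))]
    have hd : (diagonal (RCLike.ofReal ∘ l) : Matrix (Fin d) (Fin d) ℂ)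
        = ∑ i, (w i : ℂ) • diagonal (fun j => (z i j : ℂ)) := by
      rw [← hsum]
      ext a b
      rw [Matrix.sum_apply]
      by_cases hab : a = b
      · subst hab
        simp
      · simp [hab]
    rw [hsp, hd, Matrix.mul_sum, Matrix.sum_mul]
    simp
end

section
/- For every integer d ≥ 2, every integer r with 1 ≤ r ≤ d, and every p ∈ [0,1], the isotropic state ρ^iso_d(p) = p P_d + (1−p) I/d² on ℂ^d⊗ℂ^d has Schmidt number at most r if and only if p ≤ (r·d − 1)/(d² − 1). -/
open Matrix
open scoped Kronecker ComplexOrder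

lemma trace_le {d : ℕ} (C : Matrix (Fin d) (Fin d) ℂ) :
    ‖∑ j, C j j‖ ^ 2 ≤ (C.rank : ℝ) * ∑ i, ∑ j, ‖C i j‖ ^ 2 := by
  classical
  set S := LinearMap.range (Matrix.toEuclideanLin C) with hS
  have hrank : Module.finrank ℂ S = C.rank := by
    rw [hS, Matrix.toEuclideanLin_eq_toLin, ← Matrix.rank_eq_finrank_range_toLin]
  let b := stdOrthonormalBasis ℂ S
  let v : Fin d → S := fun j => ⟨Matrix.toEuclideanLin C (EuclideanSpace.single j 1), ⟨_, rfl⟩⟩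
  have hv : ∀ i j, (v j : EuclideanSpace ℂ (Fin d)) i = C i j := by
    intro i j
    simp [v, Matrix.toEuclideanLin_apply]
  have h1 : ∀ j, C j j = ∑ i, inner ℂ (b i) (v j) * (b i : EuclideanSpace ℂ (Fin d)) j := by
    intro j
    have := congrArg (fun w : S => (w : EuclideanSpace ℂ (Fin d)) j) (b.sum_repr' (v j))
    simp only [hv] at this
    rw [← this]
    simp
  have h2 : ∀ j, ∑ i, ‖inner ℂ (b i) (v j)‖ ^ 2 = ∑ i, ‖C i j‖ ^ 2 := by
    intro j
    rw [b.sum_sq_norm_inner_right, Submodule.coe_norm, EuclideanSpace.norm_sq_eq]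
    simp [hv]
  have h3 : ∀ i, ∑ j, ‖(b i : EuclideanSpace ℂ (Fin d)) j‖ ^ 2 = 1 := by
    intro i
    rw [← EuclideanSpace.norm_sq_eq, ← Submodule.coe_norm, b.norm_eq_one]; simp
  have h4 : ‖∑ j, C j j‖ ≤ ∑ x : Fin d × Fin (Module.finrank ℂ S),
      ‖inner ℂ (b x.2) (v x.1)‖ * ‖(b x.2 : EuclideanSpace ℂ (Fin d)) x.1‖ := by
    rw [Fintype.sum_prod_type]
    refine (norm_sum_le _ _).trans (Finset.sum_le_sum fun j _ => ?_)
    rw [h1 j]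
    refine (norm_sum_le _ _).trans (Finset.sum_le_sum fun i _ => ?_)
    rw [norm_mul]
  calc ‖∑ j, C j j‖ ^ 2 ≤ _ := pow_le_pow_left₀ (norm_nonneg _) h4 2
    _ ≤ _ := Finset.sum_mul_sq_le_sq_mul_sq _ _ _
    _ = _ := by
      rw [Fintype.sum_prod_type, Fintype.sum_prod_type_right]
      simp only [h2, h3]
      rw [Finset.sum_comm (f := fun i j => ‖C i j‖ ^ 2)]
      simp [hrank, mul_comm]

lemma sn_of_fintype {d r : ℕ} {ι : Type*} [Fintype ι] (ψ : ι → Fin d × Fin d → ℂ)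
    (h : ∀ i, schmidtRank (ψ i) ≤ r) :
    SchmidtNumberLE (∑ i, Matrix.vecMulVec (ψ i) (star (ψ i))) r := by
  refine ⟨Fintype.card ι, fun i => ψ ((Fintype.equivFin ι).symm i), fun i => h _, ?_⟩
  exact (Equiv.sum_comp (Fintype.equivFin ι).symm
    (fun i => Matrix.vecMulVec (ψ i) (star (ψ i)))).symm

lemma sn_add {d r : ℕ} {A B : Matrix (Fin d × Fin d) (Fin d × Fin d) ℂ}
    (hA : SchmidtNumberLE A r) (hB : SchmidtNumberLE B r) : SchmidtNumberLE (A + B) r := by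
  obtain ⟨k, ψ, h1, rfl⟩ := hA
  obtain ⟨l, φ, h2, rfl⟩ := hB
  have := sn_of_fintype (r := r) (Sum.elim ψ φ) (by rintro (i | i) <;> simp [h1, h2])
  simpa using this

lemma sn_sum {d r : ℕ} {ι : Type*} (s : Finset ι)
    (A : ι → Matrix (Fin d × Fin d) (Fin d × Fin d) ℂ)
    (hA : ∀ i, SchmidtNumberLE (A i) r) : SchmidtNumberLE (∑ i ∈ s, A i) r := by
  classical
  induction s using Finset.induction_on with
  | empty => exact ⟨0, fun i => i.elim0, fun i => i.elim0, by simp⟩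
  | insert a s ha ih => rw [Finset.sum_insert ha]; exact sn_add (hA a) ih

lemma sn_smul {d r : ℕ} {A : Matrix (Fin d × Fin d) (Fin d × Fin d) ℂ}
    (hA : SchmidtNumberLE A r) (c : ℝ) (hc : 0 ≤ c) : SchmidtNumberLE ((c : ℂ) • A) r := by
  obtain ⟨k, ψ, h1, rfl⟩ := hA
  refine ⟨k, fun i => (Real.sqrt c : ℂ) • ψ i, fun i => ?_, ?_⟩
  · refine le_trans ?_ (h1 i)
    have : (Matrix.of fun a b => ((Real.sqrt c : ℂ) • ψ i) (a, b)) =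
        (Matrix.of fun a b => ψ i (a, b)) * ((Real.sqrt c : ℂ) • (1 : Matrix (Fin d) (Fin d) ℂ)) := by
      ext a b; simp
    unfold schmidtRank
    rw [this]
    exact Matrix.rank_mul_le_left _ _
  · have hs : (c : ℂ) = (Real.sqrt c : ℂ) * (Real.sqrt c : ℂ) := by
      rw [← Complex.ofReal_mul, Real.mul_self_sqrt hc]
    rw [Finset.smul_sum]
    refine Finset.sum_congr rfl fun i _ => ?_
    ext a b
    simp only [Matrix.smul_apply, Matrix.vecMulVec_apply, Pi.smul_apply, Pi.star_apply, smul_eq_mul,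
      star_mul', Complex.star_def, Complex.conj_ofReal]
    rw [hs]; ring

/-- sums of product vectors over `T` have Schmidt rank at most `#T` -/
lemma rank_T {d r : ℕ} (g : Fin d → Fin d → ℂ) (T : Finset (Fin d)) (hT : T.card ≤ r) :
    schmidtRank (fun x : Fin d × Fin d => ∑ k ∈ T, g k x.1 * star (g k x.2)) ≤ r := by
  unfold schmidtRank
  have : (Matrix.of fun i j => ∑ k ∈ T, g k i * star (g k j)) =
      (Matrix.of fun (i : Fin d) (k : T) => g k i) * (Matrix.of fun (k : T) j => star (g k j)) := by
    ext i j
    simp only [Matrix.mul_apply, Matrix.of_apply]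
    exact (Finset.sum_coe_sort T (fun k => g k i * star (g k j))).symm
  rw [this]
  refine (Matrix.rank_mul_le_left _ _).trans ((Matrix.rank_le_card_width _).trans ?_)
  simpa using hT

lemma sn_one {d r : ℕ} (hr : 1 ≤ r) :
    SchmidtNumberLE (1 : Matrix (Fin d × Fin d) (Fin d × Fin d) ℂ) r := by
  have := sn_of_fintype (r := r) (fun x : Fin d × Fin d => (Pi.single x 1 : Fin d × Fin d → ℂ)) ?_
  · convert this using 1
    ext a b
    simp [Matrix.sum_apply, Matrix.vecMulVec_apply, Matrix.one_apply, Pi.single_apply]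
  · intro x
    refine le_trans ?_ hr
    unfold schmidtRank
    have : (Matrix.of fun i j => (Pi.single x 1 : Fin d × Fin d → ℂ) (i, j)) =
        Matrix.vecMulVec (Pi.single x.1 1) (Pi.single x.2 1) := by
      ext i j
      simp only [Matrix.of_apply, Matrix.vecMulVec_apply, Pi.single_apply, Prod.ext_iff]
      split_ifs <;> simp_all
    rw [this]
    exact Matrix.rank_vecMulVec_le _ _

def cnt (d r : ℕ) (k l : Fin d) : ℕ :=
  ((Finset.univ.powersetCard r).filter fun T : Finset (Fin d) => k ∈ T ∧ l ∈ T).card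

lemma cnt_swap {d r : ℕ} (σ : Equiv.Perm (Fin d)) (k l : Fin d) :
    cnt d r k l ≤ cnt d r (σ k) (σ l) := by
  unfold cnt
  refine Finset.card_le_card_of_injOn (fun T => T.map σ.toEmbedding) ?_ ?_
  · intro T hT
    simp only [Finset.coe_filter, Finset.mem_powersetCard, Set.mem_ofPred_eq] at hT ⊢
    simpa using hT
  · intro T _ T' _ h
    simpa using h

lemma cnt_diag {d r : ℕ} (k l : Fin d) : cnt d r k k = cnt d r l l := by
  apply le_antisymm
  · simpa using cnt_swap (Equiv.swap k l) k k
  · simpa using cnt_swap (Equiv.swap k l) l l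

lemma cnt_off {d r : ℕ} (k l l' : Fin d) (h : l ≠ k) (h' : l' ≠ k) : cnt d r k l = cnt d r k l' := by
  apply le_antisymm
  · simpa [Equiv.swap_apply_of_ne_of_ne h.symm h'.symm] using cnt_swap (r := r) (Equiv.swap l l') k l
  · simpa [Equiv.swap_apply_of_ne_of_ne h.symm h'.symm] using cnt_swap (r := r) (Equiv.swap l l') k l'

lemma cnt_sum {d r : ℕ} (k : Fin d) : ∑ l, cnt d r k l = r * cnt d r k k := by
  unfold cnt
  simp only [Finset.card_filter]
  rw [Finset.sum_comm, Finset.mul_sum]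
  refine Finset.sum_congr rfl fun T hT => ?_
  have hT := (Finset.mem_powersetCard.1 hT).2
  by_cases hk : k ∈ T <;> simp [hk, hT]

lemma cnt_rel {d r : ℕ} (k l : Fin d) (h : l ≠ k) :
    ((d : ℂ) - 1) * cnt d r k l = ((r : ℂ) - 1) * cnt d r k k := by
  have h1 := cnt_sum (r := r) k
  rw [← Finset.add_sum_erase _ _ (Finset.mem_univ k),
    Finset.sum_congr rfl (fun x hx => cnt_off (r := r) k x l (Finset.ne_of_mem_erase hx) h)] at h1
  have hd : 1 ≤ d := by have := k.2; omega
  have h2 : cnt d r k k + (d - 1) * cnt d r k l = r * cnt d r k k := by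
    simpa [Finset.card_erase_of_mem] using h1
  have h3 := congrArg (Nat.cast : ℕ → ℂ) h2
  push_cast [hd] at h3
  linear_combination h3

lemma cnt_pos {d r : ℕ} (hr : 1 ≤ r) (hr2 : r ≤ d) (k : Fin d) : 0 < cnt d r k k := by
  unfold cnt
  obtain ⟨T, hT, -, hT'⟩ := Finset.exists_subsuperset_card_eq (s := {k}) (t := Finset.univ) (n := r)
    (by simp) (by simpa using hr) (by simpa using hr2)
  refine Finset.card_pos.2 ⟨T, ?_⟩
  simp [Finset.mem_powersetCard, hT', Finset.singleton_subset_iff.1 hT]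

lemma sn_A {d r : ℕ} (hd : 2 ≤ d) (hr : 1 ≤ r) (hr2 : r ≤ d) (g : Fin d → Fin d → ℂ) :
    SchmidtNumberLE (Matrix.of fun x y : Fin d × Fin d =>
      ((r : ℂ) - 1) * ((∑ k, g k x.1 * star (g k x.2)) * star (∑ k, g k y.1 * star (g k y.2)))
      + ((d : ℂ) - r) * ∑ k, (g k x.1 * star (g k x.2)) * star (g k y.1 * star (g k y.2))) r := by
  let k0 : Fin d := ⟨0, by omega⟩
  have hc := cnt_pos hr hr2 k0
  have hd' : (1 : ℝ) < d := by exact_mod_cast hd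
  have key := sn_smul (sn_of_fintype (r := r) (fun T : (Finset.univ.powersetCard r : Finset (Finset (Fin d))) =>
    (fun x : Fin d × Fin d => ∑ k ∈ T.1, g k x.1 * star (g k x.2)))
    (fun T => rank_T g T.1 (Finset.mem_powersetCard.1 T.2).2.le)) (((d : ℝ) - 1) / cnt d r k0 k0)
    (div_nonneg (by linarith) (by positivity))
  convert key using 1
  ext x y
  set w : Fin d → Fin d × Fin d → ℂ := fun k x => g k x.1 * star (g k x.2) with hw
  have e1 : (∑ T : (Finset.univ.powersetCard r : Finset (Finset (Fin d))), (∑ k ∈ T.1, w k x) * star (∑ k ∈ T.1, w k y))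
      = ∑ k, ∑ l, (cnt d r k l : ℂ) * (w k x * star (w l y)) := by
    rw [Finset.sum_coe_sort (Finset.univ.powersetCard r : Finset (Finset (Fin d)))
      (fun T => (∑ k ∈ T, w k x) * star (∑ k ∈ T, w k y))]
    have : ∀ T : Finset (Fin d), (∑ k ∈ T, w k x) * star (∑ k ∈ T, w k y)
        = ∑ k, ∑ l, if k ∈ T ∧ l ∈ T then (w k x * star (w l y)) else 0 := by
      intro T
      have h0 : ∀ f : Fin d → ℂ, ∑ k ∈ T, f k = ∑ k, if k ∈ T then f k else 0 := by
        intro f; simp [Finset.sum_ite_mem]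
      rw [star_sum, h0, h0, Finset.sum_mul_sum]
      refine Finset.sum_congr rfl fun k _ => Finset.sum_congr rfl fun l _ => ?_
      by_cases h1 : k ∈ T <;> by_cases h2 : l ∈ T <;> simp [h1, h2]
    simp only [this]
    rw [Finset.sum_comm]
    refine Finset.sum_congr rfl fun k _ => ?_
    rw [Finset.sum_comm]
    refine Finset.sum_congr rfl fun l _ => ?_
    rw [← Finset.sum_filter, Finset.sum_const, nsmul_eq_mul, cnt]
  have e2 : ∀ k l, ((d : ℂ) - 1) / cnt d r k0 k0 * cnt d r k l = ((r : ℂ) - 1) + if k = l then ((d : ℂ) - r) else 0 := by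
    intro k l
    have hc' : (cnt d r k0 k0 : ℂ) ≠ 0 := by exact_mod_cast hc.ne'
    by_cases h : k = l
    · subst h
      rw [cnt_diag k k0]
      field_simp
      simp
    · have := cnt_rel (r := r) k l (Ne.symm h)
      rw [cnt_diag k k0] at this
      field_simp
      simp [h, this]
      try ring
  simp only [Matrix.of_apply, Matrix.smul_apply, Matrix.sum_apply, Matrix.vecMulVec_apply, Pi.star_apply]
  change _ * ((∑ k, w k x) * star (∑ k, w k y)) + _ * ∑ k, w k x * star (w k y) =
    (((((d : ℝ) - 1) / cnt d r k0 k0 : ℝ)) : ℂ) • (∑ T : (Finset.univ.powersetCard r : Finset (Finset (Fin d))), (∑ k ∈ T.1, w k x) * star (∑ k ∈ T.1, w k y))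
  rw [e1, smul_eq_mul]
  rw [Finset.mul_sum, Complex.ofReal_div, Complex.ofReal_sub, Complex.ofReal_natCast, Complex.ofReal_natCast, Complex.ofReal_one]
  have e3 : ∀ k, ((d : ℂ) - 1) / cnt d r k0 k0 * ∑ l, (cnt d r k l : ℂ) * (w k x * star (w l y)) =
      ∑ l, (((r : ℂ) - 1) + if k = l then ((d : ℂ) - r) else 0) * (w k x * star (w l y)) := by
    intro k
    rw [Finset.mul_sum]
    refine Finset.sum_congr rfl fun l _ => ?_
    rw [← mul_assoc, e2]
  rw [Finset.mul_sum Finset.univ (fun k => ∑ l, (cnt d r k l : ℂ) * (w k x * star (w l y))), Finset.sum_congr rfl fun k _ => e3 k]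
  simp only [add_mul, ite_mul, zero_mul, Finset.sum_add_distrib, mul_assoc]
  rw [star_sum, Finset.sum_mul_sum]
  simp [Finset.mul_sum]

lemma sidon (i j k l : ℕ) (h : 2 ^ i + 2 ^ l = 2 ^ j + 2 ^ k) : (i = j ∧ l = k) ∨ (i = k ∧ l = j) := by
  have lt : ∀ {a b : ℕ}, a < b → 2 * 2 ^ a ≤ 2 ^ b := by
    intro a b hab
    have := Nat.pow_le_pow_right (n := 2) (by norm_num) hab
    rw [Nat.succ_eq_add_one, pow_succ] at this; omega
  have inj : ∀ {a b : ℕ}, 2 ^ a = 2 ^ b → a = b := fun h => Nat.pow_right_injective (le_refl 2) h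
  have pi := Nat.two_pow_pos i
  have pj := Nat.two_pow_pos j
  have pk := Nat.two_pow_pos k
  have pl := Nat.two_pow_pos l
  by_cases h1 : i = j
  · subst h1; left; exact ⟨rfl, inj (by omega)⟩
  by_cases h2 : i = k
  · subst h2; right; exact ⟨rfl, inj (by omega)⟩
  by_cases h3 : l = j
  · subst h3; right; exact ⟨inj (by omega), rfl⟩
  by_cases h4 : l = k
  · subst h4; left; exact ⟨inj (by omega), rfl⟩
  exfalso
  rcases lt_or_gt_of_ne h1 with a1 | a1 <;> rcases lt_or_gt_of_ne h2 with a2 | a2 <;>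
  rcases lt_or_gt_of_ne h3 with a3 | a3 <;> rcases lt_or_gt_of_ne h4 with a4 | a4 <;>
  have b1 := lt a1 <;> have b2 := lt a2 <;> have b3 := lt a3 <;> have b4 := lt a4 <;> omega

lemma root_mul_star {N : ℕ} (hN : N ≠ 0) {z : ℂ} (hz : IsPrimitiveRoot z N) : z * star z = 1 := by
  have h := hz.norm'_eq_one hN
  rw [Complex.star_def, Complex.mul_conj, Complex.normSq_eq_norm_sq, h]; simp

lemma geom {N : ℕ} {z : ℂ} (hN : N ≠ 0) (hz : IsPrimitiveRoot z N) (a b : ℕ) (ha : a < N) (hb : b < N) :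
    ∑ t : Fin N, (z ^ a * star z ^ b) ^ (t : ℕ) = if a = b then (N : ℂ) else 0 := by
  have hzs := root_mul_star hN hz
  rw [Fin.sum_univ_eq_sum_range (fun t => (z ^ a * star z ^ b) ^ t)]
  split_ifs with h
  · subst h
    rw [← mul_pow, hzs]; simp
  · have h1 : z ^ a * star z ^ b ≠ 1 := by
      intro h1
      apply h
      apply hz.pow_inj ha hb
      calc z ^ a = z ^ a * star z ^ b * z ^ b := by
            rw [mul_assoc, ← mul_pow, mul_comm (star z), hzs]; simp
        _ = z ^ b := by rw [h1, one_mul]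
    have h2 : (z ^ a * star z ^ b) ^ N = 1 := by
      rw [mul_pow, ← pow_mul, ← pow_mul, mul_comm a, mul_comm b, pow_mul, pow_mul, ← star_pow, hz.pow_eq_one]
      simp
    have h3 := mul_geom_sum (z ^ a * star z ^ b) N
    rw [h2, sub_self] at h3
    exact (mul_eq_zero.1 h3).resolve_left (sub_ne_zero.2 h1)

lemma alg {d r N : ℕ} (hd0 : d ≠ 0) (hN : N ≠ 0) (i j a b : Fin d) :
    ((r : ℂ) * d - 1) * (if i = j ∧ a = b then 1 else 0) +
      ((d : ℂ) - r) * (if (i, j) = (a, b) then 1 else 0) =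
    ((r : ℂ) - 1) * ((if i = j then 1 else 0) * star (if a = b then (1 : ℂ) else 0)) +
      ((d : ℂ) - r) * (if i = j ∧ a = b ∧ i = a then 1 else 0) +
    ((1 : ℂ) / ((N : ℂ) * d)) • (((r : ℂ) - 1) * ∑ _t : Fin N,
        ((if i = j then (d : ℂ) else 0) * star (if a = b then (d : ℂ) else 0)) +
      ((d : ℂ) - r) * (if (i = j ∧ a = b) ∨ (i = a ∧ j = b) then (N : ℂ) * d else 0)) := by
  have hdc : (d : ℂ) ≠ 0 := by exact_mod_cast hd0
  have hNc : (N : ℂ) ≠ 0 := by exact_mod_cast hN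
  rw [Finset.sum_const, smul_eq_mul]
  simp only [Finset.card_univ, Fintype.card_fin, nsmul_eq_mul, Prod.mk.injEq]
  by_cases h1 : i = j
  · subst h1
    by_cases h2 : a = b
    · subst h2
      by_cases h3 : i = a
      · subst h3
        simp
        field_simp
        ring
      · simp [h3]
        field_simp
        ring
    · have h3 : ¬ (i = a ∧ i = b) := by rintro ⟨rfl, rfl⟩; exact h2 rfl
      simp [h2, h3]
  · by_cases h3 : i = a ∧ j = b
    · simp [h1, h3.1, h3.2]
      have : ¬ a = b := by rw [← h3.1, ← h3.2]; exact h1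
      simp [this]
      field_simp
    · simp [h1, h3]

/-- `(rd-1) ΩΩ† + (d-r) I` -/
lemma sn_ext {d r : ℕ} (hd : 2 ≤ d) (hr : 1 ≤ r) (hr2 : r ≤ d) :
    SchmidtNumberLE (Matrix.of fun x y : Fin d × Fin d =>
      ((r : ℂ) * d - 1) * (if x.1 = x.2 ∧ y.1 = y.2 then 1 else 0) +
      ((d : ℂ) - r) * (if x = y then 1 else 0)) r := by
  have hd0 : d ≠ 0 := by omega
  set N : ℕ := 2 ^ (d + 2) with hNdef
  have hN : N ≠ 0 := by positivity
  obtain ⟨z, hz⟩ : ∃ z : ℂ, IsPrimitiveRoot z N := ⟨_, Complex.isPrimitiveRoot_exp N hN⟩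
  obtain ⟨w, hw⟩ : ∃ z : ℂ, IsPrimitiveRoot z d := ⟨_, Complex.isPrimitiveRoot_exp d hd0⟩
  have hzs := root_mul_star hN hz
  have hws := root_mul_star hd0 hw
  have h1 := sn_A hd hr hr2 (fun k i : Fin d => if k = i then (1 : ℂ) else 0)
  have h2 := sn_smul (sn_sum Finset.univ _ (fun t : Fin N =>
    sn_A hd hr hr2 (fun k i : Fin d => (z ^ (2 ^ (i : ℕ))) ^ (t : ℕ) * (w ^ (i : ℕ)) ^ (k : ℕ))))
    (1 / (N * d)) (by positivity)
  convert sn_add h1 h2 using 1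
  ext ⟨i, j⟩ ⟨a, b⟩
  simp only [Matrix.add_apply, Matrix.smul_apply, Matrix.sum_apply, Matrix.of_apply]
  have hpow : ∀ i : Fin d, 2 ^ (i : ℕ) ≤ 2 ^ d := fun i => Nat.pow_le_pow_right (by norm_num) i.2.le
  have e1 : ∀ (t : Fin N) (i j : Fin d), (∑ k : Fin d, ((z ^ (2 ^ (i : ℕ))) ^ (t : ℕ) * (w ^ (i : ℕ)) ^ (k : ℕ)) *
      star ((z ^ (2 ^ (j : ℕ))) ^ (t : ℕ) * (w ^ (j : ℕ)) ^ (k : ℕ))) = if i = j then (d : ℂ) else 0 := by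
    intro t i j
    have := geom hd0 hw i j i.2 j.2
    calc _ = ((z ^ (2 ^ (i : ℕ))) ^ (t : ℕ) * star ((z ^ (2 ^ (j : ℕ))) ^ (t : ℕ))) *
        ∑ k : Fin d, (w ^ (i : ℕ) * star w ^ (j : ℕ)) ^ (k : ℕ) := by
          rw [Finset.mul_sum]
          refine Finset.sum_congr rfl fun k _ => ?_
          simp only [star_mul', star_pow, mul_pow]; ring
      _ = _ := by
        rw [this]
        simp only [Fin.val_inj]
        split_ifs with h
        · subst h
          rw [star_pow, star_pow, ← mul_pow, ← mul_pow, hzs]; simp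
        · simp
  have e2 : ∑ t : Fin N, ∑ k : Fin d, ((z ^ (2 ^ (i : ℕ))) ^ (t : ℕ) * (w ^ (i : ℕ)) ^ (k : ℕ) *
      star ((z ^ (2 ^ (j : ℕ))) ^ (t : ℕ) * (w ^ (j : ℕ)) ^ (k : ℕ))) *
      star ((z ^ (2 ^ (a : ℕ))) ^ (t : ℕ) * (w ^ (a : ℕ)) ^ (k : ℕ) *
      star ((z ^ (2 ^ (b : ℕ))) ^ (t : ℕ) * (w ^ (b : ℕ)) ^ (k : ℕ))) =
      if (i = j ∧ a = b) ∨ (i = a ∧ j = b) then (N : ℂ) * d else 0 := by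
    have hi := hpow i
    have hj := hpow j
    have ha := hpow a
    have hb := hpow b
    have hp : 0 < 2 ^ d := by positivity
    have := geom hN hz (2 ^ (i : ℕ) + 2 ^ (b : ℕ)) (2 ^ (j : ℕ) + 2 ^ (a : ℕ))
      (by rw [hNdef, pow_add]; omega) (by rw [hNdef, pow_add]; omega)
    calc _ = (∑ t : Fin N, (z ^ (2 ^ (i : ℕ) + 2 ^ (b : ℕ)) * star z ^ (2 ^ (j : ℕ) + 2 ^ (a : ℕ))) ^ (t : ℕ)) *
        ∑ k : Fin d, (w ^ (i : ℕ) * star w ^ (j : ℕ) * star w ^ (a : ℕ) * w ^ (b : ℕ)) ^ (k : ℕ) := by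
          rw [Finset.sum_mul_sum]
          refine Finset.sum_congr rfl fun t _ => Finset.sum_congr rfl fun k _ => ?_
          simp only [star_mul', star_pow, star_star, mul_pow, pow_add]; ring
      _ = _ := by
        rw [this]
        by_cases hc : (i = j ∧ a = b) ∨ (i = a ∧ j = b)
        · have hs : 2 ^ (i : ℕ) + 2 ^ (b : ℕ) = 2 ^ (j : ℕ) + 2 ^ (a : ℕ) := by
            rcases hc with ⟨rfl, rfl⟩ | ⟨rfl, rfl⟩ <;> ring
          have hk : w ^ (i : ℕ) * star w ^ (j : ℕ) * star w ^ (a : ℕ) * w ^ (b : ℕ) = 1 := by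
            rcases hc with ⟨rfl, rfl⟩ | ⟨rfl, rfl⟩
            · rw [← mul_pow, hws, mul_assoc, ← mul_pow, mul_comm (star w), hws]; simp
            · calc _ = (w * star w) ^ (i : ℕ) * (w * star w) ^ (j : ℕ) := by ring
                _ = 1 := by rw [hws]; simp
          rw [if_pos hs, if_pos hc, hk]; simp
        · rw [if_neg hc, if_neg, zero_mul]
          intro hs
          apply hc
          rcases sidon _ _ _ _ hs with ⟨h, h'⟩ | ⟨h, h'⟩
          · left; exact ⟨Fin.ext h, (Fin.ext h').symm⟩
          · right; exact ⟨Fin.ext h, (Fin.ext h').symm⟩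
  have e3 : ∑ k : Fin d, (if k = i then (1 : ℂ) else 0) * star (if k = j then (1 : ℂ) else 0) *
      star ((if k = a then (1 : ℂ) else 0) * star (if k = b then (1 : ℂ) else 0)) =
      if i = j ∧ a = b ∧ i = a then 1 else 0 := by
    rw [Finset.sum_eq_single i]
    · by_cases h1 : i = j <;> by_cases h2 : i = a <;> by_cases h3 : i = b <;> simp_all
    · intro k _ hk; simp [hk]
    · simp
  have e4 : ∀ i j : Fin d, ∑ k : Fin d, (if k = i then (1 : ℂ) else 0) * star (if k = j then (1 : ℂ) else 0) =
      if i = j then 1 else 0 := by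
    intro i j
    simp [eq_comm]
  rw [Finset.sum_add_distrib, ← Finset.mul_sum, ← Finset.mul_sum, e2, e3, e4, e4]
  simp only [e1]
  rw [Complex.ofReal_div, Complex.ofReal_mul, Complex.ofReal_natCast, Complex.ofReal_natCast, Complex.ofReal_one]
  exact alg hd0 hN i j a b

lemma sn_suff {d r : ℕ} (hd : 2 ≤ d) (hr : 1 ≤ r) (hr2 : r ≤ d) (p : ℝ) (hp0 : 0 ≤ p)
    (h : p ≤ ((r : ℝ) * (d : ℝ) - 1) / ((d : ℝ) ^ 2 - 1)) : SchmidtNumberLE (isoState d p) r := by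
  have hd' : (2 : ℝ) ≤ d := by exact_mod_cast hd
  have hr' : (1 : ℝ) ≤ r := by exact_mod_cast hr
  have hq : (0 : ℝ) < r * d - 1 := by nlinarith
  rw [le_div_iff₀ (by nlinarith)] at h
  have hq1 : (r * d - 1 : ℝ) ≠ 0 := hq.ne'
  have hq2 : (d * r - 1 : ℝ) ≠ 0 := by rw [mul_comm]; exact hq1
  have ht : (0 : ℝ) ≤ (1 - p) / d ^ 2 - p / (d * (r * d - 1)) * (d - r) := by
    have : (1 - p) / d ^ 2 - p / (d * (r * d - 1)) * (d - r) =
        (r * d - 1 - p * (d ^ 2 - 1)) / (d ^ 2 * (r * d - 1)) := by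
      field_simp; ring
    rw [this]
    exact div_nonneg (by linarith) (by positivity)
  convert sn_add (sn_smul (sn_ext hd hr hr2) (p / (d * (r * d - 1))) (by positivity))
    (sn_smul (sn_one hr) _ ht) using 1
  have hdc : (d : ℂ) ≠ 0 := by exact_mod_cast (by omega : d ≠ 0)
  have hqc : (r : ℂ) * d - 1 ≠ 0 := by exact_mod_cast hq.ne'
  have hqc2 : (d : ℂ) * r - 1 ≠ 0 := by rw [mul_comm]; exact hqc
  have hsq : ((Real.sqrt d : ℝ) : ℂ) * ((Real.sqrt d : ℝ) : ℂ) = d := by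
    rw [← Complex.ofReal_mul, Real.mul_self_sqrt (by positivity)]; simp
  have hs : ((1 / Real.sqrt d : ℝ) : ℂ) * ((1 / Real.sqrt d : ℝ) : ℂ) = 1 / d := by
    push_cast
    rw [div_mul_div_comm, hsq, one_mul]
  ext ⟨i, j⟩ ⟨a, b⟩
  have hP : projME d (i, j) (a, b) = if i = j ∧ a = b then 1 / (d : ℂ) else 0 := by
    rw [← hs]
    by_cases h1 : i = j <;> by_cases h2 : a = b <;>
      simp [projME, maxEnt, Matrix.vecMulVec_apply, h1, h2, -one_div]
  simp only [isoState, Matrix.add_apply, Matrix.smul_apply, hP, Matrix.of_apply, Matrix.one_apply, smul_eq_mul]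
  push_cast
  split_ifs <;> field_simp <;> ring

lemma sn_nec {d r : ℕ} (hd : 2 ≤ d) (p : ℝ)
    (h : SchmidtNumberLE (isoState d p) r) : p ≤ ((r : ℝ) * (d : ℝ) - 1) / ((d : ℝ) ^ 2 - 1) := by
  obtain ⟨n, ψ, hψ, e⟩ := h
  have hd' : (2 : ℝ) ≤ d := by exact_mod_cast hd
  have hd0 : d ≠ 0 := by omega
  have hdc : (d : ℂ) ≠ 0 := by exact_mod_cast hd0
  have hsq : ((Real.sqrt d : ℝ) : ℂ) * ((Real.sqrt d : ℝ) : ℂ) = d := by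
    rw [← Complex.ofReal_mul, Real.mul_self_sqrt (by positivity)]; simp
  have hs : ((1 / Real.sqrt d : ℝ) : ℂ) * ((1 / Real.sqrt d : ℝ) : ℂ) = 1 / d := by
    push_cast
    rw [div_mul_div_comm, hsq, one_mul]
  have hentry : ∀ i j a b, isoState d p (i, j) (a, b) =
      p * (if i = j ∧ a = b then 1 / (d : ℂ) else 0) + (1 - p) / d ^ 2 * (if i = a ∧ j = b then 1 else 0) := by
    intro i j a b
    have hP : projME d (i, j) (a, b) = if i = j ∧ a = b then 1 / (d : ℂ) else 0 := by
      rw [← hs]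
      by_cases h1 : i = j <;> by_cases h2 : a = b <;>
        simp [projME, maxEnt, Matrix.vecMulVec_apply, h1, h2, -one_div]
    simp only [isoState, Matrix.add_apply, Matrix.smul_apply, hP, Matrix.one_apply, smul_eq_mul, Prod.mk.injEq]
    push_cast; rfl
  have key : ∀ k, ‖∑ j, ψ k (j, j)‖ ^ 2 ≤ (r : ℝ) * ∑ i, ∑ j, ‖ψ k (i, j)‖ ^ 2 := by
    intro k
    refine (trace_le (Matrix.of fun i j => ψ k (i, j))).trans ?_
    refine mul_le_mul_of_nonneg_right (by exact_mod_cast hψ k) (by positivity)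
  have hsum := Finset.sum_le_sum fun k (_ : k ∈ Finset.univ) => key k
  rw [← Finset.mul_sum] at hsum
  have t1 : ((∑ k, ‖∑ j, ψ k (j, j)‖ ^ 2 : ℝ) : ℂ) = ((p * d + (1 - p) / d : ℝ) : ℂ) := by
    have : ∑ i, ∑ a, isoState d p (i, i) (a, a) = ((p * d + (1 - p) / d : ℝ) : ℂ) := by
      simp only [hentry, and_self]
      simp [Finset.sum_add_distrib]
      field_simp
    rw [← this, e]
    simp only [Matrix.sum_apply, Matrix.vecMulVec_apply, Pi.star_apply]
    push_cast
    simp only [← Complex.mul_conj', map_sum, Finset.sum_mul_sum]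
    rw [Finset.sum_comm]
    refine Finset.sum_congr rfl fun i _ => ?_
    rw [Finset.sum_comm]
    rfl
  have t2 : ((∑ k, ∑ i, ∑ j, ‖ψ k (i, j)‖ ^ 2 : ℝ) : ℂ) = ((1 : ℝ) : ℂ) := by
    have : ∑ i, ∑ j, isoState d p (i, j) (i, j) = ((1 : ℝ) : ℂ) := by
      simp only [hentry, and_self]
      simp [Finset.sum_add_distrib]
      field_simp
      ring
    rw [← this, e]
    simp only [Matrix.sum_apply, Matrix.vecMulVec_apply, Pi.star_apply]
    push_cast
    simp only [← Complex.mul_conj']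
    rw [Finset.sum_comm]
    refine Finset.sum_congr rfl fun i _ => ?_
    rw [Finset.sum_comm]
    rfl
  rw [Complex.ofReal_inj.1 t1, Complex.ofReal_inj.1 t2] at hsum
  rw [le_div_iff₀ (by nlinarith)]
  have h3 := mul_le_mul_of_nonneg_right hsum (by linarith : (0 : ℝ) ≤ d)
  have h4 : (p * d + (1 - p) / d) * (d : ℝ) = p * d ^ 2 + (1 - p) := by field_simp
  rw [h4] at h3
  linarith

/-- the isotropic state `ρ^iso_d(p)` has Schmidt number at most `r`
if and only if `p ≤ (r d − 1)/(d² − 1)`. -/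
theorem isotropic_schmidt_number_le_iff (d r : ℕ) (hd : 2 ≤ d) (hr1 : 1 ≤ r) (hr2 : r ≤ d)
    (p : ℝ) (hp0 : 0 ≤ p) (hp1 : p ≤ 1) :
    SchmidtNumberLE (isoState d p) r ↔
      p ≤ ((r : ℝ) * (d : ℝ) - 1) / ((d : ℝ) ^ 2 - 1) := by
  exact ⟨sn_nec hd p, sn_suff hd hr1 hr2 p hp0⟩
end
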